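/- arXiv:1506.03741 — 2 statements merged into one kernel-verified Lean document; each statement's English description precedes it below -/
import Mathlib

section
/- Let 0 < c, c₁, c₂ < 1 and A ∈ ℝ, let D > 0, and suppose f : ℝ → [0,∞) is measurable and for every ε > 0 there is a constant C_ε with f(t) ≤ C_ε(1+|t|)^ε for all t ∈ ℝ. Then for every ε > 0 there exist constants C > 0 and κ₀ ∈ (0,1) such that: for every κ ∈ (0, κ₀) with the property that |∫_{−T}^{T} f(t) dt − T(log T + A)| ≤ D·T^{1−c} for all T with κ^{−(1−c₁)} ≤ T ≤ κ^{−(1+c₂)}, one has |∫_{−∞}^{∞} (sin(κu)/u)² f(u) du − (π/2)·κ·(log(1/κ) + B)| ≤ C·(κ^{1+c} + κ^{1+c₁−ε} + κ^{1+c₂−ε}), where B = A + 2 − γ₀ − log 2. -/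
open Real MeasureTheory

lemma vl_log_bd {x δ : ℝ} (hx : 0 < x) (hδ : 0 < δ) : |Real.log x| ≤ (x ^ δ + x ^ (-δ)) / δ := by
  have h1 := Real.log_le_rpow_div hx.le hδ
  have h2 := Real.log_le_rpow_div (inv_pos.2 hx).le hδ
  rw [Real.log_inv, Real.inv_rpow hx.le, ← Real.rpow_neg hx.le] at h2
  have p1 : 0 ≤ x ^ δ / δ := by positivity
  have p2 : 0 ≤ x ^ (-δ) / δ := by positivity
  rw [add_div]
  exact abs_le.2 ⟨by linarith, by linarith⟩

lemma vl_int_crit {h : ℝ → ℝ} (hm : Measurable h) (M : ℝ)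
    (h0 : ∀ t, 0 < t → t ≤ 1 → |h t| ≤ M * t ^ (-(1/2) : ℝ))
    (h1 : ∀ t, 1 < t → |h t| ≤ M * t ^ (-(3/2) : ℝ)) : IntegrableOn h (Set.Ioi 0) := by
  rw [← Set.Ioc_union_Ioi_eq_Ioi (zero_le_one (α := ℝ))]
  refine IntegrableOn.union ?_ ?_
  · have : IntegrableOn (fun t : ℝ => M * t ^ (-(1/2) : ℝ)) (Set.Ioc 0 1) := by
      refine Integrable.const_mul ?_ M
      have := intervalIntegral.intervalIntegrable_rpow' (a := 0) (b := 1) (r := (-(1/2) : ℝ)) (by norm_num)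
      rwa [intervalIntegrable_iff_integrableOn_Ioc_of_le zero_le_one] at this
    refine this.mono' hm.aestronglyMeasurable ?_
    filter_upwards [ae_restrict_mem measurableSet_Ioc] with t ht
    exact h0 t ht.1 ht.2
  · have : IntegrableOn (fun t : ℝ => M * t ^ (-(3/2) : ℝ)) (Set.Ioi 1) :=
      (integrableOn_Ioi_rpow_of_lt (by norm_num) one_pos).const_mul M
    refine this.mono' hm.aestronglyMeasurable ?_
    filter_upwards [ae_restrict_mem measurableSet_Ioi] with t ht
    exact h1 t ht

lemma vl_gamma_log : ∫ t in Set.Ioi (0:ℝ), t * Real.exp (-t) * Real.log t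
    = 1 - Real.eulerMascheroniConstant := by
  have h1 := Complex.hasDerivAt_GammaIntegral (s := 2) (by norm_num)
  have h2 := Complex.hasDerivAt_Gamma_nat 1
  norm_num at h2
  have h3 : Complex.GammaIntegral =ᶠ[nhds 2] Complex.Gamma := by
    have : {s : ℂ | 0 < s.re} ∈ nhds (2:ℂ) :=
      (isOpen_lt continuous_const Complex.continuous_re).mem_nhds (by norm_num)
    filter_upwards [this] with s hs
    exact (Complex.Gamma_eq_integral hs).symm
  have h4 := (h3.hasDerivAt_iff.1 h1).unique (by convert! h2 using 1)
  have : ((∫ t in Set.Ioi (0:ℝ), t * Real.exp (-t) * Real.log t : ℝ) : ℂ)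
      = ((1 - Real.eulerMascheroniConstant : ℝ) : ℂ) := by
    rw [← integral_complex_ofReal]
    push_cast
    rw [sub_eq_neg_add, ← h4]
    refine setIntegral_congr_fun measurableSet_Ioi fun t _ => ?_
    norm_num
    ring
  exact_mod_cast this

lemma vl_gamma_one : ∫ t in Set.Ioi (0:ℝ), t * Real.exp (-t) = 1 := by
  have := Real.Gamma_eq_integral (s := 2) (by norm_num)
  rw [Real.Gamma_two] at this
  rw [this]
  refine setIntegral_congr_fun measurableSet_Ioi fun t _ => ?_
  norm_num
  ring

lemma vl_lap_one {v : ℝ} (hv : 0 < v) :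
    ∫ t in Set.Ioi (0:ℝ), t * Real.exp (-(v * t)) = 1 / v ^ 2 := by
  have := integral_comp_mul_left_Ioi (fun t => t * Real.exp (-t)) 0 hv
  rw [mul_zero, vl_gamma_one] at this
  simp only [mul_assoc, integral_const_mul, smul_eq_mul] at this
  field_simp at this ⊢
  linarith

lemma vl_lap_log {v : ℝ} (hv : 0 < v) :
    ∫ t in Set.Ioi (0:ℝ), t * Real.exp (-(v * t)) * Real.log t =
      (1 - Real.eulerMascheroniConstant - Real.log v) / v ^ 2 := by
  have i1 : IntegrableOn (fun t => t * Real.exp (-t) * Real.log t) (Set.Ioi (0:ℝ)) := by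
    refine not_imp_comm.1 integral_undef ?_
    rw [vl_gamma_log]
    have := Real.eulerMascheroniConstant_lt_two_thirds
    intro h; linarith
  have i0 : IntegrableOn (fun t => t * Real.exp (-t)) (Set.Ioi (0:ℝ)) := by
    refine not_imp_comm.1 integral_undef ?_
    rw [vl_gamma_one]
    norm_num
  have := integral_comp_mul_left_Ioi (fun t => t * Real.exp (-t) * Real.log t - Real.log v * (t * Real.exp (-t))) 0 hv
  rw [mul_zero, integral_sub i1 (i0.const_mul _), vl_gamma_log, integral_const_mul, vl_gamma_one] at this
  have e : ∫ t in Set.Ioi (0:ℝ), (v * t * Real.exp (-(v * t)) * Real.log (v * t) - Real.log v * (v * t * Real.exp (-(v * t))))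
     = ∫ t in Set.Ioi (0:ℝ), v * (t * Real.exp (-(v * t)) * Real.log t) := by
    refine setIntegral_congr_fun measurableSet_Ioi fun t ht => ?_
    try simp only
    rw [Real.log_mul hv.ne' (ne_of_gt ht)]
    ring
  rw [e, integral_const_mul, smul_eq_mul] at this
  field_simp at this ⊢
  linarith

lemma vl_lap_sin {t : ℝ} (ht : 0 < t) :
    IntegrableOn (fun v => Real.exp (-(v * t)) * Real.sin v ^ 2) (Set.Ioi 0) ∧
    ∫ v in Set.Ioi (0:ℝ), Real.exp (-(v * t)) * Real.sin v ^ 2 = 2 / (t * (t ^ 2 + 4)) := by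
  have hi : IntegrableOn (fun v => Real.exp (-(v * t)) * Real.sin v ^ 2) (Set.Ioi 0) := by
    have := exp_neg_integrableOn_Ioi 0 ht
    refine this.mono' (by fun_prop) (Filter.Eventually.of_forall fun v => ?_)
    rw [Real.norm_eq_abs, abs_mul, abs_of_pos (Real.exp_pos _), abs_of_nonneg (sq_nonneg _)]
    have := Real.sin_sq_le_one v
    have h2 := Real.exp_pos (-(v * t))
    rw [show -t * v = -(v * t) by ring]
    nlinarith
  refine ⟨hi, ?_⟩
  set F : ℝ → ℝ := fun v => Real.exp (-(v * t)) * (-1 / (2 * t) - (-t * Real.cos (2 * v) + 2 * Real.sin (2 * v)) / (2 * (t ^ 2 + 4))) with hF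
  have hd : ∀ v ∈ Set.Ici (0:ℝ), HasDerivAt F (Real.exp (-(v * t)) * Real.sin v ^ 2) v := by
    intro v _
    have h1 : HasDerivAt (fun v => Real.exp (-(v * t))) (Real.exp (-(v * t)) * (-(1 * t))) v :=
      (((hasDerivAt_id v).mul_const t).neg).exp
    have h2 : HasDerivAt (fun v : ℝ => 2 * v) (2 * 1) v := (hasDerivAt_id v).const_mul 2
    have h3 := ((h2.cos.const_mul (-t)).add (h2.sin.const_mul 2)).div_const (2 * (t ^ 2 + 4))
    have h4 := h1.mul (h3.const_sub (-1 / (2 * t)))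
    refine h4.congr_deriv ?_
    simp only [Pi.add_apply]
    rw [Real.sin_sq_eq_half_sub]
    field_simp
    ring
  have hlim : Filter.Tendsto F Filter.atTop (nhds 0) := by
    have e : Filter.Tendsto (fun v => Real.exp (-(v * t))) Filter.atTop (nhds 0) :=
      Real.tendsto_exp_neg_atTop_nhds_zero.comp (Filter.tendsto_id.atTop_mul_const ht)
    refine e.zero_mul_isBoundedUnder_le ?_
    refine Filter.isBoundedUnder_of ⟨|(-1 / (2 * t))| + (t + 2) / (2 * (t ^ 2 + 4)), fun v => ?_⟩
    simp only [Function.comp, Real.norm_eq_abs]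
    refine (abs_sub _ _).trans (add_le_add le_rfl ?_)
    rw [abs_div, abs_of_pos (show 0 < 2 * (t^2+4) by positivity)]
    gcongr
    refine (abs_add_le _ _).trans ?_
    rw [abs_mul, abs_mul, abs_neg, abs_of_pos ht, abs_two]
    have := Real.abs_cos_le_one (2 * v)
    have := Real.abs_sin_le_one (2 * v)
    nlinarith
  rw [integral_Ioi_of_hasDerivAt_of_tendsto' hd hi hlim]
  simp [hF]
  field_simp
  ring

lemma vl_fub {w : ℝ → ℝ} (hw : Measurable w)
    (hi : IntegrableOn (fun t => w t * (2 / (t ^ 2 + 4))) (Set.Ioi 0)) :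
    IntegrableOn (fun v => Real.sin v ^ 2 * ∫ t in Set.Ioi (0:ℝ), t * Real.exp (-(v * t)) * w t) (Set.Ioi 0) ∧
    ∫ v in Set.Ioi (0:ℝ), Real.sin v ^ 2 * ∫ t in Set.Ioi (0:ℝ), t * Real.exp (-(v * t)) * w t
      = ∫ t in Set.Ioi (0:ℝ), w t * (2 / (t ^ 2 + 4)) := by
  set P : ℝ → ℝ → ℝ := fun v t => Real.sin v ^ 2 * (t * Real.exp (-(v * t)) * w t) with hP
  have hPi : Integrable (Function.uncurry P) ((volume.restrict (Set.Ioi 0)).prod (volume.restrict (Set.Ioi 0))) := by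
    have hm : Measurable (Function.uncurry P) := by
      simp only [hP, Function.uncurry_def]
      fun_prop
    rw [integrable_prod_iff' hm.aestronglyMeasurable]
    constructor
    · filter_upwards [ae_restrict_mem measurableSet_Ioi] with t ht
      have := (vl_lap_sin ht).1.const_mul (t * w t)
      refine this.congr (Filter.Eventually.of_forall fun v => ?_)
      simp [hP]; ring
    · refine hi.norm.congr ?_
      filter_upwards [ae_restrict_mem measurableSet_Ioi] with t ht
      have ht' : 0 < t := ht
      have : ∀ v, ‖Function.uncurry P (v, t)‖ = (t * |w t|) * (Real.exp (-(v * t)) * Real.sin v ^ 2) := by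
        intro v
        simp only [hP, Function.uncurry_apply_pair, Real.norm_eq_abs, abs_mul, Real.abs_exp, abs_of_nonneg (sq_nonneg (Real.sin v)), abs_of_pos ht']
        ring
      simp_rw [this]
      rw [integral_const_mul, (vl_lap_sin ht).2, Real.norm_eq_abs, abs_mul, abs_of_pos (show 0 < 2 / (t^2+4) by positivity)]
      field_simp
  constructor
  · have := hPi.integral_prod_left
    refine this.congr (Filter.Eventually.of_forall fun v => ?_)
    simp only [Function.uncurry_apply_pair, hP, integral_const_mul]
  · have := integral_integral_swap hPi
    simp only [hP, integral_const_mul] at this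
    rw [this]
    refine setIntegral_congr_fun measurableSet_Ioi fun t ht => ?_
    have ht' : 0 < t := ht
    have e : ∀ v, Real.sin v ^ 2 * (t * Real.exp (-(v * t)) * w t) = (t * w t) * (Real.exp (-(v * t)) * Real.sin v ^ 2) := fun v => by ring
    simp only [e]
    rw [integral_const_mul, (vl_lap_sin ht).2]
    field_simp

lemma vl_int_log : IntegrableOn (fun t : ℝ => Real.log t * (2 / (t ^ 2 + 4))) (Set.Ioi 0) := by
  refine vl_int_crit (by fun_prop) 8 ?_ ?_
  · intro t h0 h1
    have hb := vl_log_bd h0 (δ := 1/2) (by norm_num)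
    have : t ^ (1/2:ℝ) ≤ t ^ (-(1/2):ℝ) := Real.rpow_le_rpow_of_exponent_ge h0 h1 (by norm_num)
    have p : 0 < t ^ (1/2:ℝ) := by positivity
    rw [abs_mul, abs_of_pos (show 0 < 2 / (t^2+4) by positivity)]
    have : 2 / (t^2+4) ≤ 1 := by rw [div_le_one (by positivity)]; nlinarith
    have : |Real.log t| ≤ 4 * t ^ (-(1/2):ℝ) := by linarith
    have : 0 ≤ 2 / (t^2+4) := by positivity
    nlinarith [abs_nonneg (Real.log t)]
  · intro t h1
    have h0 : 0 < t := by linarith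
    have hb := vl_log_bd h0 (δ := 1/2) (by norm_num)
    have : t ^ (-(1/2):ℝ) ≤ t ^ ((1/2):ℝ) := Real.rpow_le_rpow_of_exponent_le h1.le (by norm_num)
    rw [abs_mul, abs_of_pos (show 0 < 2 / (t^2+4) by positivity)]
    have h2 : 2 / (t^2+4) ≤ 2 * t ^ (-2:ℝ) := by
      rw [Real.rpow_neg h0.le, Real.rpow_two, ← div_eq_mul_inv]
      gcongr; linarith
    have h3 : |Real.log t| ≤ 4 * t ^ ((1/2):ℝ) := by linarith
    calc _ ≤ 4 * t ^ ((1/2):ℝ) * (2 * t ^ (-2:ℝ)) := by gcongr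
      _ = 8 * (t ^ ((1/2):ℝ) * t ^ (-2:ℝ)) := by ring
      _ = _ := by rw [← Real.rpow_add h0]; norm_num

lemma vl_log_int_zero : ∫ s in Set.Ioi (0:ℝ), Real.log s * (1 + s ^ 2)⁻¹ = 0 := by
  have := integral_comp_rpow_Ioi (fun s => Real.log s * (1 + s ^ 2)⁻¹) (p := -1) (by norm_num)
  have e : ∫ x in Set.Ioi (0:ℝ), (|(-1:ℝ)| * x ^ ((-1:ℝ) - 1)) • (Real.log (x ^ (-1:ℝ)) * (1 + (x ^ (-1:ℝ)) ^ 2)⁻¹)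
      = ∫ x in Set.Ioi (0:ℝ), - (Real.log x * (1 + x ^ 2)⁻¹) := by
    refine setIntegral_congr_fun measurableSet_Ioi fun t ht => ?_
    have ht' : 0 < t := ht
    try simp only
    rw [show (-1:ℝ) - 1 = -2 by norm_num, Real.rpow_neg ht'.le, Real.rpow_neg_one, Real.log_inv, Real.rpow_two]
    simp
    field_simp
    ring
  rw [e, integral_neg] at this
  linarith

lemma vl_one_int : IntegrableOn (fun t : ℝ => (1:ℝ) * (2 / (t ^ 2 + 4))) (Set.Ioi 0) ∧
    ∫ t in Set.Ioi (0:ℝ), (1:ℝ) * (2 / (t ^ 2 + 4)) = π / 2 := by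
  have := integral_comp_mul_left_Ioi (fun t => (1:ℝ) * (2 / (t ^ 2 + 4))) 0 (b := 2) (by norm_num)
  have e : ∫ t in Set.Ioi (0:ℝ), (1:ℝ) * (2 / ((2 * t) ^ 2 + 4)) = ∫ t in Set.Ioi (0:ℝ), (1/2) * (1 + t ^ 2)⁻¹ := by
    refine setIntegral_congr_fun measurableSet_Ioi fun t ht => ?_
    try simp only
    field_simp
    ring
  rw [e, mul_zero, integral_const_mul, integral_Ioi_inv_one_add_sq] at this
  simp at this
  have h2 : ∫ t in Set.Ioi (0:ℝ), (1:ℝ) * (2 / (t ^ 2 + 4)) = π / 2 := by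
    simp; linarith
  refine ⟨not_imp_comm.1 integral_undef ?_, h2⟩
  rw [h2]; positivity

lemma vl_log_int : ∫ t in Set.Ioi (0:ℝ), Real.log t * (2 / (t ^ 2 + 4)) = π / 2 * Real.log 2 := by
  have := integral_comp_mul_left_Ioi (fun t => Real.log t * (2 / (t ^ 2 + 4)) - Real.log 2 * (1 * (2 / (t ^ 2 + 4)))) 0 (b := 2) (by norm_num)
  have e : ∫ t in Set.Ioi (0:ℝ), (Real.log (2 * t) * (2 / ((2 * t) ^ 2 + 4)) - Real.log 2 * (1 * (2 / ((2 * t) ^ 2 + 4)))) = ∫ t in Set.Ioi (0:ℝ), (1/2) * (Real.log t * (1 + t ^ 2)⁻¹) := by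
    refine setIntegral_congr_fun measurableSet_Ioi fun t ht => ?_
    try simp only
    rw [Real.log_mul (by norm_num) (ne_of_gt ht)]
    field_simp
    ring
  rw [e, mul_zero, integral_const_mul, vl_log_int_zero, integral_sub vl_int_log (vl_one_int.1.const_mul _),
    integral_const_mul, vl_one_int.2, smul_eq_mul] at this
  linarith

lemma vl_sinc0 : IntegrableOn (fun v : ℝ => (Real.sin v / v) ^ 2) (Set.Ioi 0) ∧
    ∫ v in Set.Ioi (0:ℝ), (Real.sin v / v) ^ 2 = π / 2 := by
  have h := vl_fub (w := fun _ => 1) measurable_const vl_one_int.1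
  rw [vl_one_int.2] at h
  have e : Set.EqOn (fun v : ℝ => Real.sin v ^ 2 * ∫ t in Set.Ioi (0:ℝ), t * Real.exp (-(v * t)) * 1) (fun v => (Real.sin v / v) ^ 2) (Set.Ioi 0) := by
    intro v hv
    simp only [mul_one]
    rw [vl_lap_one hv]
    ring
  exact ⟨h.1.congr_fun e measurableSet_Ioi, by rw [← h.2]; exact (setIntegral_congr_fun measurableSet_Ioi e).symm⟩

lemma vl_sinc1 : IntegrableOn (fun v : ℝ => (Real.sin v / v) ^ 2 * Real.log v) (Set.Ioi 0) ∧
    ∫ v in Set.Ioi (0:ℝ), (Real.sin v / v) ^ 2 * Real.log v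
      = π / 2 * (1 - Real.eulerMascheroniConstant - Real.log 2) := by
  have h := vl_fub (w := Real.log) Real.measurable_log vl_int_log
  rw [vl_log_int] at h
  have e : Set.EqOn (fun v : ℝ => (1 - Real.eulerMascheroniConstant) * (Real.sin v / v) ^ 2 - Real.sin v ^ 2 * ∫ t in Set.Ioi (0:ℝ), t * Real.exp (-(v * t)) * Real.log t) (fun v => (Real.sin v / v) ^ 2 * Real.log v) (Set.Ioi 0) := by
    intro v hv
    simp only
    rw [vl_lap_log hv]
    ring
  have hs := vl_sinc0
  refine ⟨IntegrableOn.congr_fun ((hs.1.const_mul _).sub h.1) e measurableSet_Ioi, ?_⟩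
  rw [← setIntegral_congr_fun measurableSet_Ioi e, integral_sub (hs.1.const_mul _) h.1, integral_const_mul, hs.2, h.2]
  ring

lemma vl_main_term (A : ℝ) {κ : ℝ} (hκ : 0 < κ) :
    IntegrableOn (fun u : ℝ => (Real.sin (κ * u) / u) ^ 2 * (Real.log u + A + 1)) (Set.Ioi 0) ∧
    ∫ u in Set.Ioi (0:ℝ), (Real.sin (κ * u) / u) ^ 2 * (Real.log u + A + 1)
      = π / 2 * κ * (Real.log (1 / κ) +
              (A + 2 - Real.eulerMascheroniConstant - Real.log 2)) := by
  set H : ℝ → ℝ := fun v => (Real.sin v / v) ^ 2 * Real.log v + (A + 1 - Real.log κ) * (Real.sin v / v) ^ 2 with hH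
  have hi : IntegrableOn H (Set.Ioi 0) := vl_sinc1.1.add (vl_sinc0.1.const_mul _)
  have e : Set.EqOn (fun u => κ ^ 2 * H (κ * u)) (fun u : ℝ => (Real.sin (κ * u) / u) ^ 2 * (Real.log u + A + 1)) (Set.Ioi 0) := by
    intro u hu
    have hu' : 0 < u := hu
    simp only [hH]
    rw [Real.log_mul hκ.ne' hu'.ne']
    field_simp
    ring
  have hi2 : IntegrableOn (fun u => H (κ * u)) (Set.Ioi 0) := by
    have := (integrableOn_Ioi_comp_mul_left_iff H 0 hκ).2 (by simpa using hi)
    exact this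
  refine ⟨IntegrableOn.congr_fun (hi2.const_mul (κ ^ 2)) e measurableSet_Ioi, ?_⟩
  rw [← setIntegral_congr_fun measurableSet_Ioi e, integral_const_mul, integral_comp_mul_left_Ioi H 0 hκ, mul_zero,
    hH, integral_add vl_sinc1.1 (vl_sinc0.1.const_mul _), integral_const_mul, vl_sinc0.2, vl_sinc1.2, smul_eq_mul,
    one_div, Real.log_inv]
  field_simp
  ring

lemma vl_sin_le {κ u : ℝ} (hκ : 0 < κ) (hu : 0 < u) : (Real.sin (κ * u) / u) ^ 2 ≤ κ ^ 2 := by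
  rw [← sq_abs, abs_div, abs_of_pos hu]
  have : |Real.sin (κ * u)| ≤ κ * u := by
    have := Real.abs_sin_le_abs (x := κ * u)
    rwa [abs_of_pos (mul_pos hκ hu)] at this
  gcongr
  rwa [div_le_iff₀ hu]

lemma vl_sin_le' {κ u : ℝ} (hu : 0 < u) : (Real.sin (κ * u) / u) ^ 2 ≤ u ^ (-2 : ℝ) := by
  rw [Real.rpow_neg hu.le, Real.rpow_two, div_pow, div_eq_mul_inv]
  have := Real.sin_sq_le_one (κ * u)
  have : 0 < (u^2)⁻¹ := by positivity
  nlinarith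

lemma vl_deriv {κ u : ℝ} (hu : 0 < u) : HasDerivAt (fun u => (Real.sin (κ * u) / u) ^ 2)
    (2 * Real.sin (κ * u) * (κ * u * Real.cos (κ * u) - Real.sin (κ * u)) / u ^ 3) u := by
  have h2 : HasDerivAt (fun v : ℝ => κ * v) (κ * 1) u := (hasDerivAt_id u).const_mul κ
  have := (h2.sin.div (hasDerivAt_id u) hu.ne').pow 2
  refine this.congr_deriv ?_
  simp
  field_simp

lemma vl_deriv_bd {κ u : ℝ} (hκ : 0 < κ) (hu : 0 < u) :
    |2 * Real.sin (κ * u) * (κ * u * Real.cos (κ * u) - Real.sin (κ * u)) / u ^ 3| ≤ 4 * κ ^ 2 / u ∧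
    |2 * Real.sin (κ * u) * (κ * u * Real.cos (κ * u) - Real.sin (κ * u)) / u ^ 3| ≤ 4 * κ / u ^ 2 := by
  have hx : 0 < κ * u := mul_pos hκ hu
  have h1 : |Real.sin (κ * u)| ≤ κ * u := by
    have := Real.abs_sin_le_abs (x := κ * u)
    rwa [abs_of_pos hx] at this
  have h1' := Real.abs_sin_le_one (κ * u)
  have h2 : |κ * u * Real.cos (κ * u) - Real.sin (κ * u)| ≤ 2 * (κ * u) := by
    refine (abs_sub _ _).trans ?_
    rw [abs_mul, abs_of_pos hx]
    nlinarith [Real.abs_cos_le_one (κ * u)]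
  rw [abs_div, abs_mul, abs_mul, abs_two, abs_of_pos (show 0 < u ^ 3 by positivity)]
  constructor
  · calc _ ≤ 2 * (κ * u) * (2 * (κ * u)) / u ^ 3 := by gcongr
      _ = _ := by field_simp; norm_num
  · calc _ ≤ 2 * 1 * (2 * (κ * u)) / u ^ 3 := by gcongr
      _ = _ := by field_simp; norm_num

lemma vl_ibp {k k' g : ℝ → ℝ} {U V : ℝ} (hU : 0 < U) (hUV : U ≤ V)
    (hk : ∀ x ∈ Set.Icc U V, HasDerivAt k (k' x) x) (hkc : ContDiffOn ℝ 1 k (Set.uIcc U V))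
    (hg : IntervalIntegrable g volume 0 V) :
    ∫ x in U..V, k x * g x = k V * (∫ x in (0:ℝ)..V, g x) - k U * (∫ x in (0:ℝ)..U, g x)
      - ∫ x in U..V, k' x * ∫ y in (0:ℝ)..x, g y := by
  have hV : 0 < V := hU.trans_le hUV
  have hsub : Set.uIcc U V ⊆ Set.uIcc 0 V := by
    rw [Set.uIcc_of_le hUV, Set.uIcc_of_le hV.le]
    exact Set.Icc_subset_Icc hU.le le_rfl
  have hG : AbsolutelyContinuousOnInterval (fun x => ∫ y in (0:ℝ)..x, g y) U V :=
    (hg.absolutelyContinuousOnInterval_intervalIntegral (c := 0) (by simp)).mono hsub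
  have := AbsolutelyContinuousOnInterval.integral_mul_deriv_eq_deriv_mul hkc.absolutelyContinuousOnInterval hG
  have e1 : ∫ x in U..V, k x * g x = ∫ x in U..V, k x * deriv (fun x => ∫ y in (0:ℝ)..x, g y) x := by
    apply intervalIntegral.integral_congr_ae
    filter_upwards [hg.ae_hasDerivAt_integral] with x hx hx2
    rw [(hx (hsub (Set.uIoc_subset_uIcc hx2)) 0 (by simp)).deriv]
  have e2 : ∫ x in U..V, k' x * (∫ y in (0:ℝ)..x, g y) = ∫ x in U..V, deriv k x * ∫ y in (0:ℝ)..x, g y := by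
    apply intervalIntegral.integral_congr
    intro x hx
    rw [Set.uIcc_of_le hUV] at hx
    simp only [(hk x hx).deriv]
  rw [e1, e2, this]

lemma vl_mid {g : ℝ → ℝ} {U V κ c D : ℝ} (hκ : 0 < κ) (hU : 0 < U) (hUW : U ≤ κ⁻¹) (hWV : κ⁻¹ ≤ V)
    (hc0 : 0 < c) (hc1 : c < 1) (hD : 0 < D)
    (hg : IntervalIntegrable g volume 0 V)
    (hG : ∀ T, U ≤ T → T ≤ V → |∫ x in (0:ℝ)..T, g x| ≤ D * T ^ (1 - c)) :
    |∫ x in U..V, (Real.sin (κ * x) / x) ^ 2 * g x| ≤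
      D * (κ ^ 2 * U ^ (1 - c)) + D * V ^ (-1 - c) + 4 * D * (1 / (1 - c) + 1 / c) * κ ^ (1 + c) := by
  have hUV := hUW.trans hWV
  have hV : 0 < V := hU.trans_le hUV
  have hW : 0 < κ⁻¹ := inv_pos.2 hκ
  have hpos : ∀ x ∈ Set.uIcc U V, 0 < x := by
    intro x hx; rw [Set.uIcc_of_le hUV] at hx; exact hU.trans_le hx.1
  set k' : ℝ → ℝ := fun u => 2 * Real.sin (κ * u) * (κ * u * Real.cos (κ * u) - Real.sin (κ * u)) / u ^ 3 with hk'
  rw [vl_ibp (k' := k') hU hUV (fun x hx => vl_deriv (hU.trans_le hx.1)) ?_ hg]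
  swap
  · refine ContDiffOn.pow (ContDiffOn.div ?_ contDiffOn_id fun x hx => (hpos x hx).ne') 2
    exact (Real.contDiff_sin.comp (contDiff_const.mul contDiff_id)).contDiffOn
  set G : ℝ → ℝ := fun x => ∫ y in (0:ℝ)..x, g y with hGdef
  have hGc : ContinuousOn G (Set.uIcc U V) := by
    have := intervalIntegral.continuousOn_primitive_interval' hg (a := 0) (by simp)
    refine this.mono ?_
    rw [Set.uIcc_of_le hUV, Set.uIcc_of_le hV.le]
    exact Set.Icc_subset_Icc hU.le le_rfl
  have hk'c : ContinuousOn k' (Set.uIcc U V) := by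
    refine ContinuousOn.div (by fun_prop) (by fun_prop) fun x hx => pow_ne_zero _ (hpos x hx).ne'
  have hint : IntervalIntegrable (fun x => k' x * G x) volume U V := (hk'c.mul hGc).intervalIntegrable
  have hmem : κ⁻¹ ∈ Set.uIcc U V := by rw [Set.uIcc_of_le hUV]; exact ⟨hUW, hWV⟩
  have hi1 : IntervalIntegrable (fun x => k' x * G x) volume U κ⁻¹ := hint.mono_set (Set.uIcc_subset_uIcc Set.left_mem_uIcc hmem)
  have hi2 : IntervalIntegrable (fun x => k' x * G x) volume κ⁻¹ V := hint.mono_set (Set.uIcc_subset_uIcc hmem Set.right_mem_uIcc)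
  have b1 : |∫ x in U..κ⁻¹, k' x * G x| ≤ 4 * D * (1 / (1 - c)) * κ ^ (1 + c) := by
    have i : IntervalIntegrable (fun x : ℝ => 4 * D * κ ^ 2 * x ^ (-c)) volume U κ⁻¹ :=
      (intervalIntegral.intervalIntegrable_rpow' (by linarith)).const_mul _
    rw [← Real.norm_eq_abs]
    refine (intervalIntegral.norm_integral_le_of_norm_le hUW (Filter.Eventually.of_forall fun x hx => ?_) i).trans ?_
    · have hx0 : 0 < x := hU.trans hx.1
      have h1 := (vl_deriv_bd hκ hx0).1
      have h2 := hG x hx.1.le (hx.2.trans hWV)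
      rw [Real.norm_eq_abs, abs_mul]
      calc _ ≤ 4 * κ ^ 2 / x * (D * x ^ (1 - c)) := by gcongr
        _ = _ := by rw [sub_eq_add_neg, Real.rpow_add hx0, Real.rpow_one]; field_simp
    · rw [intervalIntegral.integral_const_mul, integral_rpow (Or.inl (by linarith))]
      have : 0 ≤ U ^ (-c + 1) := by positivity
      have h1c : 0 < 1 - c := by linarith
      calc _ ≤ 4 * D * κ ^ 2 * (κ⁻¹ ^ (-c + 1) / (-c + 1)) := by
            have : 0 < -c + 1 := by linarith
            gcongr; linarith
        _ = 4 * D * (1 / (1 - c)) * (κ ^ (2:ℝ) * κ ^ (-(-c + 1))) := by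
            rw [Real.inv_rpow hκ.le, Real.rpow_neg hκ.le, Real.rpow_two, show -c + 1 = 1 - c by ring]; ring
        _ = _ := by rw [← Real.rpow_add hκ]; ring_nf
  have b2 : |∫ x in κ⁻¹..V, k' x * G x| ≤ 4 * D * (1 / c) * κ ^ (1 + c) := by
    have hn : (0:ℝ) ∉ Set.uIcc κ⁻¹ V := by
      rw [Set.uIcc_of_le hWV]; intro h; linarith [h.1]
    have i : IntervalIntegrable (fun x : ℝ => 4 * D * κ * x ^ (-1 - c)) volume κ⁻¹ V :=
      (intervalIntegral.intervalIntegrable_rpow (Or.inr hn)).const_mul _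
    rw [← Real.norm_eq_abs]
    refine (intervalIntegral.norm_integral_le_of_norm_le hWV (Filter.Eventually.of_forall fun x hx => ?_) i).trans ?_
    · have hx0 : 0 < x := hW.trans hx.1
      have h1 := (vl_deriv_bd hκ hx0).2
      have h2 := hG x (hUW.trans hx.1.le) hx.2
      rw [Real.norm_eq_abs, abs_mul]
      calc _ ≤ 4 * κ / x ^ 2 * (D * x ^ (1 - c)) := by gcongr
        _ = 4 * D * κ * (x ^ (-2:ℝ) * x ^ (1 - c)) := by
            rw [Real.rpow_neg hx0.le, Real.rpow_two]; ring
        _ = _ := by rw [← Real.rpow_add hx0]; ring_nf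
    · rw [intervalIntegral.integral_const_mul, integral_rpow (Or.inr ⟨by linarith, hn⟩)]
      have : 0 ≤ V ^ (-c) := by positivity
      have e : (V ^ (-1 - c + 1) - κ⁻¹ ^ (-1 - c + 1)) / (-1 - c + 1) = (κ⁻¹ ^ (-c) - V ^ (-c)) / c := by
        rw [show -1 - c + 1 = -c by ring]; field_simp; ring
      rw [e]
      calc _ ≤ 4 * D * κ * (κ⁻¹ ^ (-c) / c) := by
            gcongr; linarith
        _ = 4 * D * (1 / c) * (κ ^ (1:ℝ) * κ ^ c) := by
            rw [Real.inv_rpow hκ.le, Real.rpow_neg hκ.le, inv_inv, Real.rpow_one]; ring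
        _ = _ := by rw [← Real.rpow_add hκ]
  have b3 : |∫ x in U..V, k' x * G x| ≤ 4 * D * (1 / (1 - c) + 1 / c) * κ ^ (1 + c) := by
    rw [← intervalIntegral.integral_add_adjacent_intervals hi1 hi2]
    refine (abs_add_le _ _).trans ((add_le_add b1 b2).trans (le_of_eq ?_))
    ring
  have b4 : |(Real.sin (κ * U) / U) ^ 2 * G U| ≤ D * (κ ^ 2 * U ^ (1 - c)) := by
    rw [abs_mul, abs_of_nonneg (sq_nonneg _)]
    calc _ ≤ κ ^ 2 * (D * U ^ (1 - c)) := by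
          exact mul_le_mul (vl_sin_le hκ hU) (hG U le_rfl hUV) (abs_nonneg _) (by positivity)
      _ = _ := by ring
  have b5 : |(Real.sin (κ * V) / V) ^ 2 * G V| ≤ D * V ^ (-1 - c) := by
    rw [abs_mul, abs_of_nonneg (sq_nonneg _)]
    calc _ ≤ V ^ (-2:ℝ) * (D * V ^ (1 - c)) := by
          gcongr
          · exact vl_sin_le' hV
          · exact hG V hUV le_rfl
      _ = D * (V ^ (-2:ℝ) * V ^ (1 - c)) := by ring
      _ = _ := by rw [← Real.rpow_add hV]; ring_nf
  have := abs_sub ((Real.sin (κ * V) / V) ^ 2 * G V - (Real.sin (κ * U) / U) ^ 2 * G U) (∫ x in U..V, k' x * G x)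
  have := abs_sub ((Real.sin (κ * V) / V) ^ 2 * G V) ((Real.sin (κ * U) / U) ^ 2 * G U)
  simp only [hGdef] at *
  linarith

lemma vl_kg_int {g : ℝ → ℝ} {κ M δ : ℝ} (hκ : 0 < κ) (hκ1 : κ < 1) (hδ : 0 < δ) (hδ' : δ ≤ 1 / 4) (hM : 0 ≤ M)
    (hgm : Measurable g) (hgb : ∀ u, 0 < u → |g u| ≤ M * (u ^ δ + u ^ (-δ))) :
    IntegrableOn (fun u => (Real.sin (κ * u) / u) ^ 2 * g u) (Set.Ioi 0) := by
  refine vl_int_crit (by fun_prop) (2 * M) ?_ ?_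
  · intro t h0 h1
    rw [abs_mul, abs_of_nonneg (sq_nonneg _)]
    have a1 : t ^ δ ≤ t ^ (-(1/2):ℝ) := Real.rpow_le_rpow_of_exponent_ge h0 h1 (by linarith)
    have a2 : t ^ (-δ) ≤ t ^ (-(1/2):ℝ) := Real.rpow_le_rpow_of_exponent_ge h0 h1 (by linarith)
    have a3 := vl_sin_le hκ h0
    have a4 : (Real.sin (κ * t) / t) ^ 2 ≤ 1 := a3.trans (by nlinarith)
    calc _ ≤ 1 * (M * (t ^ (-(1/2):ℝ) + t ^ (-(1/2):ℝ))) := by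
          gcongr
          exact (hgb t h0).trans (by gcongr)
      _ = _ := by ring
  · intro t h1
    have h0 : 0 < t := by linarith
    rw [abs_mul, abs_of_nonneg (sq_nonneg _)]
    have a1 : t ^ δ ≤ t ^ ((1/2):ℝ) := Real.rpow_le_rpow_of_exponent_le h1.le (by linarith)
    have a2 : t ^ (-δ) ≤ t ^ ((1/2):ℝ) := Real.rpow_le_rpow_of_exponent_le h1.le (by linarith)
    calc _ ≤ t ^ (-2:ℝ) * (M * (t ^ ((1/2):ℝ) + t ^ ((1/2):ℝ))) := by
          gcongr
          · exact vl_sin_le' h0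
          · exact (hgb t h0).trans (by gcongr)
      _ = 2 * M * (t ^ (-2:ℝ) * t ^ ((1/2):ℝ)) := by ring
      _ = _ := by rw [← Real.rpow_add h0]; norm_num

lemma vl_g_int {g : ℝ → ℝ} {M δ V : ℝ} (hδ : 0 < δ) (hδ' : δ ≤ 1 / 4) (hV : 0 < V)
    (hgm : Measurable g) (hgb : ∀ u, 0 < u → |g u| ≤ M * (u ^ δ + u ^ (-δ))) :
    IntervalIntegrable g volume 0 V := by
  have i : IntervalIntegrable (fun u : ℝ => M * (u ^ δ + u ^ (-δ))) volume 0 V :=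
    ((intervalIntegral.intervalIntegrable_rpow' (by linarith)).add
      (intervalIntegral.intervalIntegrable_rpow' (by linarith))).const_mul M
  refine i.mono_fun' hgm.aestronglyMeasurable ?_
  filter_upwards [ae_restrict_mem measurableSet_uIoc] with u hu
  rw [Set.uIoc_of_le hV.le] at hu
  exact hgb u hu.1

lemma vl_core {g : ℝ → ℝ} {U V κ c D M δ : ℝ} (hκ : 0 < κ) (hκ1 : κ < 1) (hU : 1 ≤ U) (hUW : U ≤ κ⁻¹) (hWV : κ⁻¹ ≤ V)
    (hc0 : 0 < c) (hc1 : c < 1) (hD : 0 < D) (hδ : 0 < δ) (hδ' : δ ≤ 1 / 4) (hM : 0 ≤ M)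
    (hgm : Measurable g) (hgb : ∀ u, 0 < u → |g u| ≤ M * (u ^ δ + u ^ (-δ)))
    (hG : ∀ T, U ≤ T → T ≤ V → |∫ x in (0:ℝ)..T, g x| ≤ D * T ^ (1 - c)) :
    |∫ x in Set.Ioi (0:ℝ), (Real.sin (κ * x) / x) ^ 2 * g x| ≤
      (3 * M + D) * (κ ^ 2 * U ^ (1 + δ)) + (3 * M + D) * V ^ (-1 + δ)
        + 4 * D * (1 / (1 - c) + 1 / c) * κ ^ (1 + c) := by
  have hU0 : 0 < U := by linarith
  have hUV := hUW.trans hWV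
  have hV : 0 < V := hU0.trans_le hUV
  have hV1 : 1 ≤ V := hU.trans hUV
  have hint := vl_kg_int hκ hκ1 hδ hδ' hM hgm hgb
  have hmid := vl_mid hκ hU0 hUW hWV hc0 hc1 hD (vl_g_int hδ hδ' hV hgm hgb) hG
  have hhead : |∫ x in (0:ℝ)..U, (Real.sin (κ * x) / x) ^ 2 * g x| ≤ 3 * M * (κ ^ 2 * U ^ (1 + δ)) := by
    have i1 : IntervalIntegrable (fun u : ℝ => u ^ δ) volume 0 U := intervalIntegral.intervalIntegrable_rpow' (by linarith)
    have i2 : IntervalIntegrable (fun u : ℝ => u ^ (-δ)) volume 0 U := intervalIntegral.intervalIntegrable_rpow' (by linarith)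
    have i : IntervalIntegrable (fun u : ℝ => κ ^ 2 * M * (u ^ δ + u ^ (-δ))) volume 0 U := (i1.add i2).const_mul _
    rw [← Real.norm_eq_abs]
    refine (intervalIntegral.norm_integral_le_of_norm_le hU0.le (Filter.Eventually.of_forall fun x hx => ?_) i).trans ?_
    · rw [Real.norm_eq_abs, abs_mul, abs_of_nonneg (sq_nonneg _), mul_assoc (κ ^ 2)]
      exact mul_le_mul (vl_sin_le hκ hx.1) (hgb x hx.1) (abs_nonneg _) (by positivity)
    · rw [intervalIntegral.integral_const_mul, intervalIntegral.integral_add i1 i2,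
        integral_rpow (Or.inl (by linarith)), integral_rpow (Or.inl (by linarith)),
        Real.zero_rpow (by linarith), Real.zero_rpow (by linarith), sub_zero, sub_zero]
      have a1 : U ^ (δ + 1) / (δ + 1) ≤ U ^ (1 + δ) := by
        rw [add_comm]; exact div_le_self (by positivity) (by linarith)
      have a2 : U ^ (-δ + 1) / (-δ + 1) ≤ 2 * U ^ (1 + δ) := by
        rw [div_le_iff₀ (by linarith)]
        have : U ^ (-δ + 1) ≤ U ^ (1 + δ) := Real.rpow_le_rpow_of_exponent_le hU (by linarith)
        have : 0 < U ^ (1 + δ) := by positivity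
        nlinarith
      calc _ ≤ κ ^ 2 * M * (U ^ (1 + δ) + 2 * U ^ (1 + δ)) := by gcongr
        _ = _ := by ring
  have htail : |∫ x in Set.Ioi V, (Real.sin (κ * x) / x) ^ 2 * g x| ≤ 3 * M * V ^ (-1 + δ) := by
    have i : IntegrableOn (fun u : ℝ => 2 * M * u ^ (-2 + δ)) (Set.Ioi V) :=
      (integrableOn_Ioi_rpow_of_lt (by linarith) hV).const_mul _
    rw [← Real.norm_eq_abs]
    refine (norm_integral_le_of_norm_le i ?_).trans ?_
    · filter_upwards [ae_restrict_mem measurableSet_Ioi] with x hx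
      have hx1 : 1 ≤ x := hV1.trans (le_of_lt hx)
      have hx0 : 0 < x := by linarith
      have a1 : x ^ (-δ) ≤ x ^ δ := Real.rpow_le_rpow_of_exponent_le hx1 (by linarith)
      rw [Real.norm_eq_abs, abs_mul, abs_of_nonneg (sq_nonneg _)]
      calc _ ≤ x ^ (-2:ℝ) * (M * (x ^ δ + x ^ δ)) := by
            gcongr
            · exact vl_sin_le' hx0
            · exact (hgb x hx0).trans (by gcongr)
        _ = 2 * M * (x ^ (-2:ℝ) * x ^ δ) := by ring
        _ = _ := by rw [← Real.rpow_add hx0]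
    · rw [integral_const_mul, integral_Ioi_rpow_of_lt (by linarith) hV]
      have a : -V ^ (-2 + δ + 1) / (-2 + δ + 1) ≤ (3/2) * V ^ (-1 + δ) := by
        rw [show -2 + δ + 1 = -(1 - δ) by ring, neg_div_neg_eq, show -(1 - δ) = -1 + δ by ring, div_le_iff₀ (by linarith)]
        have : 0 < V ^ (-1 + δ) := by positivity
        nlinarith
      calc _ ≤ 2 * M * ((3/2) * V ^ (-1 + δ)) := by gcongr
        _ = _ := by ring
  have hsplit : ∫ x in Set.Ioi (0:ℝ), (Real.sin (κ * x) / x) ^ 2 * g x =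
      (∫ x in (0:ℝ)..U, (Real.sin (κ * x) / x) ^ 2 * g x) + (∫ x in U..V, (Real.sin (κ * x) / x) ^ 2 * g x)
      + ∫ x in Set.Ioi V, (Real.sin (κ * x) / x) ^ 2 * g x := by
    have iV := hint.mono_set (Set.Ioi_subset_Ioi hV.le)
    have iU := hint.mono_set (Set.Ioi_subset_Ioi hU0.le)
    have s1 := intervalIntegral.integral_interval_add_Ioi hint iU
    have s2 := intervalIntegral.integral_interval_add_Ioi iU iV
    rw [← s1, ← s2]; ring
  rw [hsplit]
  have t1 := abs_add_le ((∫ x in (0:ℝ)..U, (Real.sin (κ * x) / x) ^ 2 * g x) + (∫ x in U..V, (Real.sin (κ * x) / x) ^ 2 * g x)) (∫ x in Set.Ioi V, (Real.sin (κ * x) / x) ^ 2 * g x)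
  have t2 := abs_add_le (∫ x in (0:ℝ)..U, (Real.sin (κ * x) / x) ^ 2 * g x) (∫ x in U..V, (Real.sin (κ * x) / x) ^ 2 * g x)
  have q1 : D * (κ ^ 2 * U ^ (1 - c)) ≤ D * (κ ^ 2 * U ^ (1 + δ)) := by
    have : U ^ (1 - c) ≤ U ^ (1 + δ) := Real.rpow_le_rpow_of_exponent_le hU (by linarith)
    gcongr
  have q2 : D * V ^ (-1 - c) ≤ D * V ^ (-1 + δ) := by
    have : V ^ (-1 - c) ≤ V ^ (-1 + δ) := Real.rpow_le_rpow_of_exponent_le hV1 (by linarith)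
    gcongr
  linarith

lemma vl_fold {q : ℝ → ℝ} (h1 : IntegrableOn q (Set.Ioi 0))
    (h2 : IntegrableOn (fun x => q (-x)) (Set.Ioi 0)) :
    ∫ x, q x = ∫ x in Set.Ioi (0:ℝ), (q x + q (-x)) := by
  have h3 : IntegrableOn q (Set.Iic 0) := by
    have := (Measure.measurePreserving_neg (volume : Measure ℝ)).integrableOn_comp_preimage
      (Homeomorph.neg ℝ).measurableEmbedding (f := q) (s := Set.Iic 0)
    rw [← this]
    have e : Neg.neg ⁻¹' (Set.Iic (0:ℝ)) = Set.Ici 0 := by ext x; simp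
    rw [e, integrableOn_Ici_iff_integrableOn_Ioi]
    exact h2
  rw [integral_add h1 h2, integral_comp_neg_Ioi, neg_zero, add_comm]
  exact (intervalIntegral.integral_Iic_add_Ioi h3 h1).symm

lemma vl_one_le {u δ : ℝ} (hu : 0 < u) (hδ : 0 < δ) : 1 ≤ u ^ δ + u ^ (-δ) := by
  have h1 : 0 < u ^ δ := by positivity
  have h2 : 0 < u ^ (-δ) := by positivity
  rcases le_total 1 u with h | h
  · have := Real.one_le_rpow h hδ.le
    linarith
  · have := Real.one_le_rpow_of_pos_of_le_one_of_nonpos hu h (neg_nonpos.2 hδ.le)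
    linarith

lemma vl_f_bd {f : ℝ → ℝ} {K δ : ℝ} (hnn : ∀ t, 0 ≤ f t) (hδ : 0 < δ) (hδ1 : δ ≤ 1) (hK : 0 ≤ K)
    (h : ∀ t, f t ≤ K * (1 + |t|) ^ δ) {u t : ℝ} (hu : 0 < u) (ht : |t| = u) :
    |f t| ≤ 2 * K * (u ^ δ + u ^ (-δ)) := by
  rw [abs_of_nonneg (hnn t)]
  have h1 := h t
  rw [ht] at h1
  have h2 : (1 + u) ^ δ ≤ 2 * (u ^ δ + u ^ (-δ)) := by
    have := Real.rpow_add_le_add_rpow zero_le_one hu.le hδ.le hδ1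
    rw [Real.one_rpow] at this
    have := vl_one_le hu hδ
    have : 0 < u ^ (-δ) := by positivity
    linarith
  calc _ ≤ _ := h1
    _ ≤ K * (2 * (u ^ δ + u ^ (-δ))) := by gcongr
    _ = _ := by ring

lemma vl_G_eq {f : ℝ → ℝ} {A T : ℝ} (hf : IntervalIntegrable f volume 0 T)
    (hf' : IntervalIntegrable (fun x => f (-x)) volume 0 T) :
    ∫ u in (0:ℝ)..T, (f u + f (-u) - (Real.log u + A + 1)) =
      (∫ t in (-T)..T, f t) - T * (Real.log T + A) := by
  have hf2 : IntervalIntegrable f volume (-T) 0 := by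
    have := (IntervalIntegrable.iff_comp_neg (by simp)).1 hf'
    simpa using this.symm
  have hl : IntervalIntegrable Real.log volume 0 T := intervalIntegral.intervalIntegrable_log'
  have hl2 : IntervalIntegrable (fun u => Real.log u + A) volume 0 T := hl.add intervalIntegrable_const
  rw [intervalIntegral.integral_sub (hf.add hf') (hl2.add intervalIntegrable_const),
    intervalIntegral.integral_add hf hf', intervalIntegral.integral_add hl2 intervalIntegrable_const,
    intervalIntegral.integral_add hl intervalIntegrable_const, integral_log,
    intervalIntegral.integral_comp_neg, neg_zero,
    ← intervalIntegral.integral_add_adjacent_intervals hf2 hf]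
  simp
  ring

/-- **Lemma 1 (Goldston–Montgomery type).** If `∫_{-T}^{T} f = T(log T + A) + O(T^{1-c})`
uniformly for `κ^{-(1-c₁)} ≤ T ≤ κ^{-(1+c₂)}`, then
`∫ (sin κu / u)² f(u) du = (π/2) κ (log(1/κ) + B) + O(κ^{1+c} + κ^{1+c₁-ε} + κ^{1+c₂-ε})`,
where `B = A + 2 - γ₀ - log 2`. -/
theorem variance_lemma_lot
    (c c₁ c₂ A D : ℝ) (hc0 : 0 < c) (hc1 : c < 1) (hc₁0 : 0 < c₁) (hc₁1 : c₁ < 1)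
    (hc₂0 : 0 < c₂) (hc₂1 : c₂ < 1) (hD : 0 < D)
    (f : ℝ → ℝ) (hmeas : Measurable f) (hnn : ∀ t, 0 ≤ f t)
    (hgrow : ∀ ε : ℝ, 0 < ε → ∃ Cε : ℝ, ∀ t : ℝ, f t ≤ Cε * (1 + |t|) ^ ε) :
    ∀ ε : ℝ, 0 < ε → ∃ C : ℝ, 0 < C ∧ ∃ κ₀ : ℝ, 0 < κ₀ ∧ κ₀ < 1 ∧
      ∀ κ : ℝ, 0 < κ → κ < κ₀ →
        (∀ T : ℝ, κ ^ (-(1 - c₁)) ≤ T → T ≤ κ ^ (-(1 + c₂)) →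
          |(∫ t in (-T)..T, f t) - T * (Real.log T + A)| ≤ D * T ^ (1 - c)) →
        |(∫ u : ℝ, (if u = 0 then κ ^ 2 else (Real.sin (κ * u) / u) ^ 2) * f u) -
            π / 2 * κ * (Real.log (1 / κ) +
              (A + 2 - Real.eulerMascheroniConstant - Real.log 2))|
          ≤ C * (κ ^ (1 + c) + κ ^ (1 + c₁ - ε) + κ ^ (1 + c₂ - ε)) := by
  intro ε hε
  set δ : ℝ := min (ε / 2) (1 / 4) with hδdef
  have hδ : 0 < δ := lt_min (by linarith) (by norm_num)
  have hδ' : δ ≤ 1 / 4 := min_le_right _ _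
  have hδε : 2 * δ ≤ ε := by have := min_le_left (ε / 2) (1 / 4 : ℝ); linarith
  obtain ⟨K, hK⟩ := hgrow δ hδ
  have hK0 : 0 ≤ K := by
    have := (hnn 0).trans (hK 0)
    simpa using this
  set M : ℝ := 4 * K + 1 / δ + |A + 1| with hMdef
  have hM : 0 ≤ M := by positivity
  set g : ℝ → ℝ := fun u => f u + f (-u) - (Real.log u + A + 1) with hgdef
  have hgm : Measurable g := by fun_prop
  have hf1 : ∀ u, 0 < u → |f u| ≤ 2 * K * (u ^ δ + u ^ (-δ)) := fun u hu =>
    vl_f_bd hnn hδ (by linarith) hK0 hK hu (abs_of_pos hu)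
  have hf2 : ∀ u, 0 < u → |f (-u)| ≤ 2 * K * (u ^ δ + u ^ (-δ)) := fun u hu =>
    vl_f_bd hnn hδ (by linarith) hK0 hK hu (by rw [abs_neg, abs_of_pos hu])
  have hgb : ∀ u, 0 < u → |g u| ≤ M * (u ^ δ + u ^ (-δ)) := by
    intro u hu
    have h1 := hf1 u hu
    have h2 := hf2 u hu
    have h3 := vl_log_bd hu hδ
    have h4 := vl_one_le hu hδ
    have h5 : |A + 1| ≤ |A + 1| * (u ^ δ + u ^ (-δ)) := le_mul_of_one_le_right (abs_nonneg _) h4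
    have t1 := abs_sub (f u + f (-u)) (Real.log u + (A + 1))
    have t2 := abs_add_le (f u) (f (-u))
    have t3 := abs_add_le (Real.log u) (A + 1)
    have e : g u = f u + f (-u) - (Real.log u + (A + 1)) := by simp only [hgdef]; ring
    rw [e, hMdef]
    have e2 : (u ^ δ + u ^ (-δ)) / δ = 1 / δ * (u ^ δ + u ^ (-δ)) := by ring
    rw [e2] at h3
    linarith
  have hfm' : Measurable (fun u => f (-u)) := by fun_prop
  have hcc : 0 < 1 / (1 - c) + 1 / c := by
    have : 0 < 1 - c := by linarith
    positivity
  refine ⟨3 * M + D + 4 * D * (1 / (1 - c) + 1 / c), by positivity, 1 / 2, by norm_num, by norm_num, ?_⟩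
  intro κ hκ hκ2 hyp
  have hκ1 : κ < 1 := by linarith
  have hU : 1 ≤ κ ^ (-(1 - c₁)) := Real.one_le_rpow_of_pos_of_le_one_of_nonpos hκ hκ1.le (by linarith)
  have hUW : κ ^ (-(1 - c₁)) ≤ κ⁻¹ := by
    rw [← Real.rpow_neg_one]
    exact Real.rpow_le_rpow_of_exponent_ge hκ hκ1.le (by linarith)
  have hWV : κ⁻¹ ≤ κ ^ (-(1 + c₂)) := by
    rw [← Real.rpow_neg_one]
    exact Real.rpow_le_rpow_of_exponent_ge hκ hκ1.le (by linarith)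
  have hG : ∀ T, κ ^ (-(1 - c₁)) ≤ T → T ≤ κ ^ (-(1 + c₂)) →
      |∫ x in (0:ℝ)..T, g x| ≤ D * T ^ (1 - c) := by
    intro T h1 h2
    have hT : 0 < T := by linarith
    rw [hgdef, vl_G_eq (vl_g_int hδ hδ' hT hmeas hf1) (vl_g_int hδ hδ' hT hfm' hf2)]
    exact hyp T h1 h2
  have hcore := vl_core hκ hκ1 hU hUW hWV hc0 hc1 hD hδ hδ' hM hgm hgb hG
  obtain ⟨hmi, hme⟩ := vl_main_term A hκ
  have k2 : (0:ℝ) ≤ 2 * K := by positivity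
  have j1 := vl_kg_int hκ hκ1 hδ hδ' k2 hmeas hf1
  have j2 := vl_kg_int hκ hκ1 hδ hδ' k2 hfm' hf2
  have jg := vl_kg_int hκ hκ1 hδ hδ' hM hgm hgb
  have eqL : (∫ u : ℝ, (if u = 0 then κ ^ 2 else (Real.sin (κ * u) / u) ^ 2) * f u) =
      (∫ x in Set.Ioi (0:ℝ), (Real.sin (κ * x) / x) ^ 2 * g x) +
        ∫ u in Set.Ioi (0:ℝ), (Real.sin (κ * u) / u) ^ 2 * (Real.log u + A + 1) := by
    rw [vl_fold, ← integral_add jg hmi]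
    · refine setIntegral_congr_fun measurableSet_Ioi fun u hu => ?_
      have hu0 : u ≠ 0 := ne_of_gt hu
      simp [hu0, hgdef]
      ring
    · refine j1.congr_fun (fun u hu => ?_) measurableSet_Ioi
      have hu0 : u ≠ 0 := ne_of_gt hu
      simp [hu0]
    · refine j2.congr_fun (fun u hu => ?_) measurableSet_Ioi
      have hu0 : u ≠ 0 := ne_of_gt hu
      simp [hu0]
  rw [eqL, ← hme, add_sub_cancel_right]
  refine hcore.trans ?_
  have p1 : κ ^ 2 * (κ ^ (-(1 - c₁))) ^ (1 + δ) ≤ κ ^ (1 + c₁ - ε) := by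
    rw [← Real.rpow_mul hκ.le, ← Real.rpow_two, ← Real.rpow_add hκ]
    exact Real.rpow_le_rpow_of_exponent_ge hκ hκ1.le (by nlinarith)
  have p2 : (κ ^ (-(1 + c₂))) ^ (-1 + δ) ≤ κ ^ (1 + c₂ - ε) := by
    rw [← Real.rpow_mul hκ.le]
    exact Real.rpow_le_rpow_of_exponent_ge hκ hκ1.le (by nlinarith)
  have x0 : 0 < κ ^ (1 + c) := by positivity
  have x1 : 0 < κ ^ (1 + c₁ - ε) := by positivity
  have x2 : 0 < κ ^ (1 + c₂ - ε) := by positivity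
  have y1 : 0 ≤ 3 * M + D := by positivity
  have y2 : 0 ≤ 4 * D * (1 / (1 - c) + 1 / c) := by positivity
  have z1 := mul_le_mul_of_nonneg_left p1 y1
  have z2 := mul_le_mul_of_nonneg_left p2 y1
  have w0 := mul_nonneg y1 x0.le
  have w1 := mul_nonneg y2 x1.le
  have w2 := mul_nonneg y2 x2.le
  linarith
end

section
/- Let 0 < c, c₁, c₂ < 1 and B ∈ ℝ, let D > 0, let g : [2,∞) → [0,∞), and suppose f : ℝ → [0,∞) is measurable and for every ε > 0 there is a constant C_ε with f(t) ≤ C_ε(1+|t|)^ε for all t ∈ ℝ. Then for every ε > 0 there exists a constant C > 0 such that: for every T ≥ 2 with the property that |∫_{−∞}^{∞} (sin(κu)/u)² f(u) du − (π/2)·κ·(log(1/κ) + B)| ≤ D·κ^{1+c}·g(T) for all κ with T^{−(1+c₁)} ≤ κ ≤ T^{−(1−c₂)}, one has |∫_{−T}^{T} f(t) dt − T(log T + A)| ≤ C·((T³ g(T))^{1/(3+c)+ε} + T^{1−2c₁+ε} + T^{1−c₂/4+ε}), where A = B − 2 + γ₀ + log 2. -/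
open Real MeasureTheory


namespace VL

/-- local part of the logarithm -/
noncomputable def ell (u : ℝ) : ℝ := (Set.Icc (-1:ℝ) 1).indicator (fun u => |Real.log u|) u

lemma ell_nonneg (u : ℝ) : 0 ≤ ell u := by
  unfold ell; exact Set.indicator_nonneg (fun _ _ => abs_nonneg _) _

lemma ell_integrable : Integrable ell := by
  have h : IntervalIntegrable Real.log volume (-1) 1 := intervalIntegral.intervalIntegrable_log'
  rw [intervalIntegrable_iff_integrableOn_Icc_of_le (by norm_num)] at h
  have h2 : IntegrableOn (fun u => |Real.log u|) (Set.Icc (-1:ℝ) 1) := Integrable.norm h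
  exact (h2.integrable_indicator measurableSet_Icc).congr (Filter.Eventually.of_forall fun x => rfl)

lemma abs_log_le {δ : ℝ} (hδ : 0 < δ) (u : ℝ) : |Real.log u| ≤ ell u + (1 + |u|) ^ δ / δ := by
  by_cases h : u ∈ Set.Icc (-1:ℝ) 1
  · have : ell u = |Real.log u| := by unfold ell; rw [Set.indicator_of_mem h]
    rw [this]; have : 0 ≤ (1 + |u|) ^ δ / δ := by positivity
    linarith
  · have h1 : 1 < |u| := by
      by_contra hh
      exact h (abs_le.1 (not_lt.1 hh))
    have h2 : 0 ≤ Real.log |u| := Real.log_nonneg h1.le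
    have h3 : |Real.log u| = Real.log |u| := by rw [← Real.log_abs u, abs_of_nonneg h2]
    rw [h3]
    have := Real.log_le_rpow_div (abs_nonneg u) hδ
    have h4 : |u| ^ δ / δ ≤ (1 + |u|) ^ δ / δ := by
      gcongr; linarith
    linarith [ell_nonneg u]

lemma int_pow : Integrable (fun u : ℝ => (1 + |u|) ^ (1/2 : ℝ) / (1 + u^2)) := by
  have h := integrable_rpow_neg_one_add_norm_sq (E := ℝ) (μ := volume) (r := 3/2) (by norm_num)
  refine (h.const_mul 2).mono' (Measurable.aestronglyMeasurable (by fun_prop)) (Filter.Eventually.of_forall fun u => ?_)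
  rw [Real.norm_of_nonneg (by positivity)]
  have hu : 0 < 1 + u^2 := by positivity
  have e1 : (1 + ‖u‖^2) ^ (-(3/2)/2 : ℝ) = (1+u^2)^(1/4:ℝ) / (1+u^2) := by
    rw [Real.norm_eq_abs, sq_abs, ← Real.rpow_sub_one hu.ne']; norm_num
  rw [e1, ← mul_div_assoc]
  gcongr
  have h2 : 1 + |u| ≤ 4 * (1+u^2)^(1/2:ℝ) := by
    rw [← Real.sqrt_eq_rpow]
    have : |u| ≤ √(1+u^2) := Real.abs_le_sqrt (by linarith)
    have : 1 ≤ √(1+u^2) := Real.one_le_sqrt.2 (by nlinarith)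
    linarith
  calc (1 + |u|)^(1/2:ℝ) ≤ (4 * (1+u^2)^(1/2:ℝ))^(1/2:ℝ) := by gcongr
    _ = 2 * (1+u^2)^(1/4:ℝ) := by
      rw [Real.mul_rpow (by norm_num) (by positivity), ← Real.rpow_mul hu.le]
      congr 1
      · rw [← Real.sqrt_eq_rpow]; rw [show (4:ℝ) = 2^2 by norm_num, Real.sqrt_sq (by norm_num)]
      · norm_num

lemma int_log : Integrable (fun u : ℝ => Real.log u / (1 + u^2)) := by
  refine (ell_integrable.add (int_pow.const_mul 2)).mono' (Measurable.aestronglyMeasurable (by fun_prop)) (Filter.Eventually.of_forall fun u => ?_)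
  have hu : 0 < 1 + u^2 := by positivity
  rw [norm_div, Real.norm_eq_abs, Real.norm_of_nonneg hu.le]
  have := abs_log_le (δ := 1/2) (by norm_num) u
  simp only [Pi.add_apply]
  rw [div_le_iff₀ hu, add_mul, mul_assoc, div_mul_cancel₀ _ hu.ne']
  nlinarith [ell_nonneg u, mul_nonneg (ell_nonneg u) (sq_nonneg u)]

lemma log_int_zero : ∫ x in Set.Ioi (0:ℝ), Real.log x / (1 + x^2) = 0 := by
  have h := integral_comp_rpow_Ioi (fun x : ℝ => Real.log x / (1 + x^2)) (p := -1) (by norm_num)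
  have h2 : ∫ x in Set.Ioi (0:ℝ), (|(-1:ℝ)| * x ^ ((-1:ℝ) - 1)) • (Real.log (x^(-1:ℝ)) / (1 + (x^(-1:ℝ))^2))
     = ∫ x in Set.Ioi (0:ℝ), - (Real.log x / (1 + x^2)) := by
    refine setIntegral_congr_fun measurableSet_Ioi fun x hx => ?_
    have hx : 0 < x := hx
    simp only [smul_eq_mul]
    rw [Real.rpow_neg_one, Real.log_inv, Real.rpow_sub_one hx.ne', Real.rpow_neg_one, abs_neg, abs_one]
    field_simp
    ring
  rw [h2, integral_neg] at h
  linarith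

lemma lap (t : ℝ) (ht : 0 < t) :
    IntegrableOn (fun v => Real.sin v ^ 2 * Real.exp (-(t*v))) (Set.Ioi 0) ∧
    ∫ v in Set.Ioi (0:ℝ), Real.sin v ^ 2 * Real.exp (-(t*v)) = 2 / (t * (t^2+4)) := by
  have hd : ∀ x ∈ Set.Ici (0:ℝ), HasDerivAt (fun v => Real.exp (-(t*v)) *
      (-1/(2*t) + (t * Real.cos (2*v) - 2 * Real.sin (2*v)) / (2*(t^2+4))))
      (Real.sin x ^ 2 * Real.exp (-(t*x))) x := by
    intro x _
    have h1 : HasDerivAt (fun v : ℝ => Real.exp (-(t*v))) (Real.exp (-(t*x)) * (-(t*1))) x :=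
      (((hasDerivAt_id x).const_mul t).neg).exp
    have h2 : HasDerivAt (fun v : ℝ => Real.cos (2*v)) (-Real.sin (2*x) * (2*1)) x :=
      ((hasDerivAt_id x).const_mul 2).cos
    have h3 : HasDerivAt (fun v : ℝ => Real.sin (2*v)) (Real.cos (2*x) * (2*1)) x :=
      ((hasDerivAt_id x).const_mul 2).sin
    have h4 := h1.mul (((((h2.const_mul t).sub (h3.const_mul 2)).div_const (2*(t^2+4)))).const_add (-1/(2*t)))
    refine h4.congr_deriv ?_
    have : Real.cos (2*x) = 1 - 2 * Real.sin x ^ 2 := by rw [Real.cos_two_mul, Real.cos_sq']; ring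
    have h7 : (t^2+4) ≠ 0 := by positivity
    simp only [Pi.sub_apply]
    rw [this]
    field_simp
    ring
  have hlim : Filter.Tendsto (fun v => Real.exp (-(t*v)) *
      (-1/(2*t) + (t * Real.cos (2*v) - 2 * Real.sin (2*v)) / (2*(t^2+4)))) Filter.atTop (nhds 0) := by
    have h1 : Filter.Tendsto (fun v : ℝ => Real.exp (-(t*v))) Filter.atTop (nhds 0) :=
      Real.tendsto_exp_neg_atTop_nhds_zero.comp (Filter.tendsto_id.const_mul_atTop ht)
    refine Filter.Tendsto.zero_mul_isBoundedUnder_le h1 ?_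
    refine Filter.isBoundedUnder_of ⟨1/(2*t) + (t+2)/(2*(t^2+4)), fun v => ?_⟩
    simp only [Function.comp]
    have hc := Real.abs_cos_le_one (2*v)
    have hs := Real.abs_sin_le_one (2*v)
    rw [Real.norm_eq_abs]
    refine (abs_add_le _ _).trans ?_
    rw [abs_div, abs_div, abs_neg, abs_one, abs_of_pos (show 0 < 2*t by positivity), abs_of_pos (show 0 < 2*(t^2+4) by positivity)]
    gcongr
    refine (abs_sub _ _).trans ?_
    rw [abs_mul, abs_mul, abs_of_pos ht, abs_two]
    nlinarith
  have hn : ∀ x ∈ Set.Ioi (0:ℝ), 0 ≤ Real.sin x ^ 2 * Real.exp (-(t*x)) := fun x _ => by positivity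
  refine ⟨integrableOn_Ioi_deriv_of_nonneg' hd hn hlim, ?_⟩
  rw [integral_Ioi_of_hasDerivAt_of_nonneg' hd hn hlim]
  simp
  field_simp
  ring

lemma gam1 (v : ℝ) (hv : 0 < v) : ∫ t in Set.Ioi (0:ℝ), t * Real.exp (-(t*v)) = 1 / v^2 := by
  have := Real.integral_rpow_mul_exp_neg_mul_Ioi (a := 2) (r := v) (by norm_num) hv
  rw [show Real.Gamma 2 = 1 from Real.Gamma_two] at this
  norm_num at this
  rw [one_div, ← this]
  refine setIntegral_congr_fun measurableSet_Ioi fun x hx => ?_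
  simp [mul_comm]

lemma gam2 : ∫ t in Set.Ioi (0:ℝ), t * Real.log t * Real.exp (-t) = 1 - eulerMascheroniConstant := by
  have h1 := Complex.hasDerivAt_GammaIntegral (s := 2) (by norm_num)
  have h2 := Complex.hasDerivAt_Gamma_nat 1
  norm_num at h2
  have h3 : Complex.Gamma =ᶠ[nhds 2] Complex.GammaIntegral := by
    have : {s : ℂ | 0 < s.re} ∈ nhds (2:ℂ) :=
      (isOpen_lt continuous_const Complex.continuous_re).mem_nhds (by norm_num)
    filter_upwards [this] with s hs using Complex.Gamma_eq_integral hs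
  have h4 := (h1.congr_of_eventuallyEq h3).unique h2
  have h5 : ∫ (t : ℝ) in Set.Ioi 0, (t:ℂ) ^ ((2:ℂ) - 1) * (↑(Real.log t) * ↑(rexp (-t)))
     = ∫ (t : ℝ) in Set.Ioi 0, ((t * Real.log t * Real.exp (-t) : ℝ) : ℂ) := by
    refine setIntegral_congr_fun measurableSet_Ioi fun x hx => ?_
    have : (2:ℂ) - 1 = 1 := by norm_num
    simp only [this, Complex.cpow_one]
    push_cast; ring
  rw [h5, integral_complex_ofReal] at h4
  have h6 := congrArg Complex.re h4
  simp at h6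
  rw [h6]; ring
end VL

namespace VL

lemma gam1_int (v : ℝ) (hv : 0 < v) : IntegrableOn (fun t => t * Real.exp (-(t*v))) (Set.Ioi 0) := by
  by_contra h
  have h1 := gam1 v hv
  rw [integral_undef h] at h1
  have : 0 < 1 / v^2 := by positivity
  linarith

lemma gam2_int : IntegrableOn (fun t => t * Real.log t * Real.exp (-t)) (Set.Ioi 0) := by
  by_contra h
  have h1 := gam2
  rw [integral_undef h] at h1
  linarith [Real.eulerMascheroniConstant_lt_two_thirds]

lemma gam3 (v : ℝ) (hv : 0 < v) : ∫ t in Set.Ioi (0:ℝ), Real.log t * (t * Real.exp (-(t*v)))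
    = (1 - eulerMascheroniConstant - Real.log v) / v^2 := by
  have h1 := integral_comp_mul_left_Ioi (fun t => t * Real.log t * Real.exp (-t)) 0 hv
  rw [mul_zero, gam2] at h1
  have hi : IntegrableOn (fun t => (v*t) * Real.log (v*t) * Real.exp (-(v*t))) (Set.Ioi 0) := by
    have := (integrableOn_Ioi_comp_mul_left_iff (fun t => t * Real.log t * Real.exp (-t)) 0 hv).2
      (by rw [mul_zero]; exact gam2_int)
    exact this
  have h2 : ∫ t in Set.Ioi (0:ℝ), Real.log t * (t * Real.exp (-(t*v))) =
     ∫ t in Set.Ioi (0:ℝ), (v⁻¹ * ((v*t) * Real.log (v*t) * Real.exp (-(v*t))) - Real.log v * (t * Real.exp (-(t*v)))) := by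
    refine setIntegral_congr_fun measurableSet_Ioi fun x hx => ?_
    have hx : 0 < x := hx
    rw [Real.log_mul hv.ne' hx.ne', mul_comm v x]
    field_simp
    ring
  rw [h2, integral_sub (hi.const_mul _) ((gam1_int v hv).const_mul _), integral_const_mul, integral_const_mul,
    gam1 v hv, h1, smul_eq_mul]
  field_simp

lemma swapJ (w : ℝ → ℝ) (hw : Measurable w)
    (hi : IntegrableOn (fun t => w t * (2 / (t^2+4))) (Set.Ioi 0)) :
    ∫ v in Set.Ioi (0:ℝ), Real.sin v ^ 2 * ∫ t in Set.Ioi (0:ℝ), w t * (t * Real.exp (-(t*v)))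
     = ∫ t in Set.Ioi (0:ℝ), w t * (2 / (t^2+4)) := by
  have key : Integrable (Function.uncurry (fun v t : ℝ => Real.sin v ^ 2 * (w t * (t * Real.exp (-(t*v))))))
      ((volume.restrict (Set.Ioi 0)).prod (volume.restrict (Set.Ioi 0))) := by
    rw [integrable_prod_iff' (Measurable.aestronglyMeasurable (by unfold Function.uncurry; fun_prop))]
    constructor
    · filter_upwards [ae_restrict_mem measurableSet_Ioi] with t ht
      refine ((lap t ht).1.mul_const (w t * t)).congr (Filter.Eventually.of_forall fun v => ?_)
      simp only [Function.uncurry]; ring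
    · refine hi.norm.congr ?_
      filter_upwards [ae_restrict_mem measurableSet_Ioi] with t ht
      have ht : 0 < t := ht
      have : ∀ v : ℝ, ‖Function.uncurry (fun v t : ℝ => Real.sin v ^ 2 * (w t * (t * Real.exp (-(t*v))))) (v, t)‖
         = (|w t| * t) * (Real.sin v ^ 2 * Real.exp (-(t*v))) := by
        intro v
        simp only [Function.uncurry, Real.norm_eq_abs, abs_mul, abs_of_pos ht, Real.abs_exp, abs_pow, sq_abs]
        ring
      simp_rw [this]
      rw [integral_const_mul, (lap t ht).2, Real.norm_eq_abs, abs_mul, abs_of_pos (show 0 < 2/(t^2+4) by positivity)]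
      field_simp
  have := integral_integral_swap key
  simp_rw [integral_const_mul] at this
  rw [this]
  refine setIntegral_congr_fun measurableSet_Ioi fun t ht => ?_
  have ht : 0 < t := ht
  have h2 : ∀ v : ℝ, Real.sin v ^ 2 * (w t * (t * Real.exp (-(t*v)))) = (w t * t) * (Real.sin v ^ 2 * Real.exp (-(t*v))) := by
    intro v; ring
  simp only [h2]
  rw [integral_const_mul, (lap t ht).2]
  field_simp

lemma sc (F : ℝ → ℝ) : ∫ t in Set.Ioi (0:ℝ), F (t/2) * (2/(t^2+4)) = ∫ x in Set.Ioi (0:ℝ), F x * (1+x^2)⁻¹ := by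
  have h := integral_comp_mul_left_Ioi (fun x => F x * (1+x^2)⁻¹) 0 (b := 1/2) (by norm_num)
  rw [mul_zero] at h
  have h2 : ∫ t in Set.Ioi (0:ℝ), F (t/2) * (2/(t^2+4)) = ∫ t in Set.Ioi (0:ℝ), (1/2) * (F (1/2*t) * (1+(1/2*t)^2)⁻¹) := by
    refine setIntegral_congr_fun measurableSet_Ioi fun t ht => ?_
    simp only [show 1/2*t = t/2 by ring]
    have : t^2+4 ≠ 0 := by positivity
    have : 1+(t/2)^2 ≠ 0 := by positivity
    field_simp
    ring
  rw [h2, integral_const_mul, h]; simp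

lemma two_int : Integrable (fun t : ℝ => 2 / (t^2+4)) := by
  refine (integrable_inv_one_add_sq.const_mul 2).mono' (Measurable.aestronglyMeasurable (by fun_prop)) (Filter.Eventually.of_forall fun u => ?_)
  rw [Real.norm_of_nonneg (by positivity), ← div_eq_mul_inv]
  gcongr 2 / ?_
  nlinarith

lemma two_int_log : Integrable (fun t : ℝ => Real.log t * (2 / (t^2+4))) := by
  refine ((int_log.norm).const_mul 2).mono' (Measurable.aestronglyMeasurable (by fun_prop)) (Filter.Eventually.of_forall fun u => ?_)
  rw [norm_mul, Real.norm_of_nonneg (show 0 ≤ 2/(u^2+4) by positivity), norm_div, Real.norm_of_nonneg (show 0 ≤ 1 + u^2 by positivity),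
   show 2 * (‖Real.log u‖ / (1+u^2)) = ‖Real.log u‖ * (2 / (1+u^2)) by ring]
  gcongr ‖Real.log u‖ * (2 / ?_)
  nlinarith

lemma J1 : ∫ v in Set.Ioi (0:ℝ), (Real.sin v / v)^2 = π/2 := by
  have h := swapJ (fun _ => 1) measurable_const (by simpa using two_int.integrableOn)
  have h2 := sc (fun _ => 1)
  simp only [one_mul] at h h2
  rw [h2, integral_Ioi_inv_one_add_sq, Real.arctan_zero, sub_zero] at h
  rw [← h]
  refine setIntegral_congr_fun measurableSet_Ioi fun v hv => ?_
  rw [gam1 v hv]; ring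

lemma sinc_le (v : ℝ) : (Real.sin v / v)^2 ≤ 2 / (1+v^2) := by
  rcases eq_or_ne v 0 with rfl | hv
  · simp
  have hv2 : 0 < v^2 := by positivity
  rw [div_pow, div_le_div_iff₀ hv2 (by positivity)]
  have h1 : Real.sin v ^2 ≤ 1 := Real.sin_sq_le_one v
  have h2 : Real.sin v ^2 ≤ v^2 := sq_le_sq.2 (Real.abs_sin_le_abs)
  nlinarith

lemma sinc_int : Integrable (fun v : ℝ => (Real.sin v / v)^2) := by
  refine (integrable_inv_one_add_sq.const_mul 2).mono' (Measurable.aestronglyMeasurable (by fun_prop)) (Filter.Eventually.of_forall fun u => ?_)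
  rw [Real.norm_of_nonneg (by positivity), ← div_eq_mul_inv]
  exact sinc_le u

lemma sinc_log_int : Integrable (fun v : ℝ => (Real.sin v / v)^2 * Real.log v) := by
  refine ((int_log.norm).const_mul 2).mono' (Measurable.aestronglyMeasurable (by fun_prop)) (Filter.Eventually.of_forall fun u => ?_)
  rw [norm_mul, norm_div, Real.norm_of_nonneg (show 0 ≤ 1 + u^2 by positivity), Real.norm_of_nonneg (show 0 ≤ (Real.sin u / u)^2 by positivity),
   show 2 * (‖Real.log u‖ / (1+u^2)) = (2 / (1+u^2)) * ‖Real.log u‖ by ring]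
  gcongr
  exact sinc_le u

lemma J2 : ∫ v in Set.Ioi (0:ℝ), (Real.sin v / v)^2 * Real.log v = π/2 * (1 - eulerMascheroniConstant - Real.log 2) := by
  have h := swapJ Real.log Real.measurable_log two_int_log.integrableOn
  have h2 : ∫ t in Set.Ioi (0:ℝ), Real.log t * (2/(t^2+4)) = Real.log 2 * (π/2) := by
    have e : ∫ t in Set.Ioi (0:ℝ), Real.log t * (2/(t^2+4)) = ∫ t in Set.Ioi (0:ℝ), (fun x => Real.log x + Real.log 2) (t/2) * (2/(t^2+4)) := by
      refine setIntegral_congr_fun measurableSet_Ioi fun t ht => ?_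
      have ht : 0 < t := ht
      simp only
      rw [Real.log_div ht.ne' (by norm_num)]; ring
    rw [e, sc (fun x => Real.log x + Real.log 2)]
    simp_rw [add_mul]
    rw [integral_add, integral_const_mul, integral_Ioi_inv_one_add_sq, Real.arctan_zero, sub_zero]
    · simp_rw [← div_eq_mul_inv]; rw [log_int_zero, zero_add]
    · have h9 : IntegrableOn (fun u : ℝ => Real.log u * (1 + u^2)⁻¹) (Set.Ioi 0) := by
        simpa [div_eq_mul_inv] using int_log.integrableOn (s := Set.Ioi 0)
      exact h9
    · exact (integrable_inv_one_add_sq.integrableOn).const_mul _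
  rw [h2] at h
  have e : ∫ v in Set.Ioi (0:ℝ), (Real.sin v / v)^2 * Real.log v =
     ∫ v in Set.Ioi (0:ℝ), ((1 - eulerMascheroniConstant) * (Real.sin v / v)^2 - Real.sin v ^ 2 * ∫ t in Set.Ioi (0:ℝ), Real.log t * (t * Real.exp (-(t*v)))) := by
    refine setIntegral_congr_fun measurableSet_Ioi fun v hv => ?_
    rw [gam3 v hv]; ring
  rw [e, integral_sub, h, integral_const_mul, J1]
  · ring
  · exact sinc_int.integrableOn.const_mul _
  · by_contra hh
    rw [integral_undef hh] at h
    have : 0 < Real.log 2 * (π/2) := by have := Real.log_pos one_lt_two; positivity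
    linarith

/-- the model density -/
noncomputable def f0 (B u : ℝ) : ℝ := (Real.log u + 1 + (B - 2 + eulerMascheroniConstant + Real.log 2)) / 2

lemma Rf0 (B κ : ℝ) (hκ : 0 < κ) : ∫ u : ℝ, (Real.sin (κ*u) / u)^2 * f0 B u = π/2 * κ * (Real.log (1/κ) + B) := by
  set A := B - 2 + eulerMascheroniConstant + Real.log 2 with hA
  have h1 := integral_comp_abs (f := fun u => (Real.sin (κ*u) / u)^2 * f0 B u)
  have h2 : ∀ u : ℝ, (Real.sin (κ*|u|) / |u|)^2 * f0 B |u| = (Real.sin (κ*u) / u)^2 * f0 B u := by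
    intro u
    unfold f0
    rw [Real.log_abs]
    rcases abs_choice u with h | h
    · rw [h]
    · rw [h]; simp
  simp_rw [h2] at h1
  rw [h1]
  have h3 := integral_comp_mul_left_Ioi (fun v => (κ/2) * κ * ((Real.sin v / v)^2 * Real.log v + (1 + A - Real.log κ) * (Real.sin v / v)^2)) 0 hκ
  rw [mul_zero] at h3
  have h4 : ∫ u in Set.Ioi (0:ℝ), (Real.sin (κ*u) / u)^2 * f0 B u =
     ∫ u in Set.Ioi (0:ℝ), (κ/2) * κ * ((Real.sin (κ*u) / (κ*u))^2 * Real.log (κ*u) + (1 + A - Real.log κ) * (Real.sin (κ*u) / (κ*u))^2) := by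
    refine setIntegral_congr_fun measurableSet_Ioi fun u hu => ?_
    have hu : 0 < u := hu
    simp only [f0]
    rw [Real.log_mul hκ.ne' hu.ne', ← hA]
    field_simp
    ring
  rw [h4, h3, integral_const_mul, integral_add sinc_log_int.integrableOn (sinc_int.integrableOn.const_mul _), integral_const_mul, J1, J2, smul_eq_mul,
    one_div, Real.log_inv, hA]
  field_simp
  ring
end VL

namespace VL

lemma polyint {s : ℝ} (hs : 0 < s) (F : ℝ → ℝ) (hF : Measurable F) (M : ℝ) (hM : ∀ κ, |F κ| ≤ M * (1 + κ^2)) :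
    Integrable (fun κ => F κ * Real.exp (-(s^2) * κ^2)) := by
  have h1 := integrable_exp_neg_mul_sq (b := s^2) (by positivity)
  have h2 := integrable_rpow_mul_exp_neg_mul_sq (b := s^2) (by positivity) (s := 2) (by norm_num)
  refine ((h1.add h2).const_mul M).mono' (Measurable.aestronglyMeasurable (by fun_prop)) (Filter.Eventually.of_forall fun κ => ?_)
  simp only [Pi.add_apply, Real.rpow_two]
  rw [norm_mul, Real.norm_eq_abs, Real.norm_eq_abs, Real.abs_exp]
  calc |F κ| * Real.exp (-(s^2) * κ^2) ≤ (M * (1 + κ^2)) * Real.exp (-(s^2) * κ^2) := by gcongr; exact hM κ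
    _ = _ := by ring

lemma gaussR {s : ℝ} (hs : 0 < s) (x : ℝ) :
    ∫ κ : ℝ, Real.cos (2*κ*x) * Real.exp (-(s^2) * κ^2) = √π / s * Real.exp (-(x/s)^2) := by
  have h := fourierIntegral_gaussian (b := ((s^2 : ℝ) : ℂ)) (by rw [Complex.ofReal_re]; positivity) ((2*x : ℝ) : ℂ)
  have h2 := congrArg Complex.re h
  have hint : Integrable (fun κ : ℝ => Complex.exp (Complex.I * ((2*x : ℝ) : ℂ) * κ) * Complex.exp (-((s^2 : ℝ) : ℂ) * (κ:ℂ)^2)) := by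
    have h1 := integrable_exp_neg_mul_sq (b := s^2) (by positivity)
    refine h1.mono' (by fun_prop) (Filter.Eventually.of_forall fun κ => ?_)
    rw [norm_mul, Complex.norm_exp, Complex.norm_exp]
    simp [← Complex.ofReal_pow]
  have h3 := integral_re hint
  simp only [RCLike.re_to_complex] at h3
  rw [← h3] at h2
  have e1 : ∀ κ : ℝ, (Complex.exp (Complex.I * ((2*x : ℝ) : ℂ) * κ) * Complex.exp (-((s^2 : ℝ) : ℂ) * (κ:ℂ)^2)).re
      = Real.cos (2*κ*x) * Real.exp (-(s^2) * κ^2) := by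
    intro κ
    have a1 : Complex.exp (-((s^2 : ℝ) : ℂ) * (κ:ℂ)^2) = ((Real.exp (-(s^2) * κ^2) : ℝ) : ℂ) := by push_cast; rfl
    have a2 : Complex.I * ((2*x : ℝ) : ℂ) * κ = ((2*κ*x : ℝ) : ℂ) * Complex.I := by push_cast; ring
    rw [a1, a2, Complex.re_mul_ofReal, Complex.exp_ofReal_mul_I_re]
  simp_rw [e1] at h2
  rw [h2]
  have a3 : ((π : ℂ) / ((s^2 : ℝ) : ℂ)) ^ (1/2 : ℂ) = ((√π / s : ℝ) : ℂ) := by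
    rw [← Complex.ofReal_div, show (1/2 : ℂ) = ((1/2 : ℝ) : ℂ) by push_cast; rfl, ← Complex.ofReal_cpow (by positivity),
      ← Real.sqrt_eq_rpow, Real.sqrt_div pi_pos.le, Real.sqrt_sq hs.le]
  have a4 : Complex.exp (-(((2*x : ℝ) : ℂ))^2 / (4 * ((s^2 : ℝ) : ℂ))) = ((Real.exp (-(x/s)^2) : ℝ) : ℂ) := by
    rw [Complex.ofReal_exp]; congr 1; push_cast
    have : (s : ℂ) ≠ 0 := by exact_mod_cast hs.ne'
    field_simp
    norm_num
    ring
  rw [a3, a4, ← Complex.ofReal_mul, Complex.ofReal_re]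

/-- second derivative of `cos (2κy) exp(-s²κ²)` -/
noncomputable def q (s y κ : ℝ) : ℝ :=
  (-4*y^2*Real.cos (2*κ*y) + 8*s^2*y*κ*Real.sin (2*κ*y) + (4*s^4*κ^2 - 2*s^2)*Real.cos (2*κ*y)) *
    Real.exp (-(s^2) * κ^2)

lemma q_bound {s T y κ : ℝ} (hs : 0 < s) (hsT : s ≤ T) (hy : |y| ≤ T) :
    |q s y κ| ≤ 16 * T^2 * Real.exp (-(s^2/2) * κ^2) := by
  unfold q
  have hT : 0 < T := hs.trans_le hsT
  rw [abs_mul, Real.abs_exp]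
  have e : Real.exp (-(s^2) * κ^2) = Real.exp (-(s^2/2) * κ^2) * Real.exp (-(s^2/2) * κ^2) := by
    rw [← Real.exp_add]; congr 1; ring
  rw [e, ← mul_assoc]
  refine mul_le_mul_of_nonneg_right ?_ (Real.exp_pos _).le
  have hx : 1 + (s*κ)^2/2 ≤ Real.exp ((s^2/2) * κ^2) := by
    have := Real.add_one_le_exp ((s^2/2) * κ^2)
    nlinarith
  have hcos := Real.abs_cos_le_one (2*κ*y)
  have hsin := Real.abs_sin_le_one (2*κ*y)
  have hy2 : y^2 ≤ T^2 := by rw [← sq_abs]; gcongr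
  have hs2 : s^2 ≤ T^2 := by gcongr
  have b1 : |-4*y^2*Real.cos (2*κ*y)| ≤ 4*T^2 := by
    rw [abs_mul, abs_mul, abs_pow, sq_abs]; norm_num
    calc 4 * y^2 * |Real.cos (2*κ*y)| ≤ 4 * T^2 * 1 := by gcongr
      _ = _ := by ring
  have b2 : |8*s^2*y*κ*Real.sin (2*κ*y)| ≤ 8*T^2*|s*κ| := by
    have : |8*s^2*y*κ*Real.sin (2*κ*y)| = 8 * s * |y| * |s*κ| * |Real.sin (2*κ*y)| := by
      simp only [abs_mul, abs_pow, abs_of_pos hs, abs_of_pos (show (0:ℝ) < 8 by norm_num)]; ring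
    rw [this]
    calc 8 * s * |y| * |s*κ| * |Real.sin (2*κ*y)| ≤ 8 * T * T * |s*κ| * 1 := by gcongr
      _ = _ := by ring
  have b3 : |(4*s^4*κ^2 - 2*s^2)*Real.cos (2*κ*y)| ≤ (4*(s*κ)^2 + 2)*T^2 := by
    rw [abs_mul]
    have : |4*s^4*κ^2 - 2*s^2| ≤ (4*(s*κ)^2 + 2)*s^2 := by
      rw [abs_le]; constructor <;> nlinarith [sq_nonneg (s^2*κ), sq_nonneg s]
    calc |4*s^4*κ^2 - 2*s^2| * |Real.cos (2*κ*y)| ≤ ((4*(s*κ)^2 + 2)*s^2) * 1 := by gcongr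
      _ ≤ (4*(s*κ)^2 + 2)*T^2 := by rw [mul_one]; gcongr
  have tot : |-4*y^2*Real.cos (2*κ*y) + 8*s^2*y*κ*Real.sin (2*κ*y) + (4*s^4*κ^2 - 2*s^2)*Real.cos (2*κ*y)|
     ≤ 16 * T^2 * (1 + (s*κ)^2/2) := by
    have := abs_add_three (-4*y^2*Real.cos (2*κ*y)) (8*s^2*y*κ*Real.sin (2*κ*y)) ((4*s^4*κ^2 - 2*s^2)*Real.cos (2*κ*y))
    have h8 : 2*|s*κ| ≤ 1 + (s*κ)^2 := by
      have := sq_nonneg (|s*κ| - 1); rw [← sq_abs (s*κ)]; nlinarith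
    have h9 : 8*T^2*|s*κ| ≤ 4*T^2*(1+(s*κ)^2) := by nlinarith [sq_nonneg T]
    nlinarith [sq_nonneg T]
  calc _ ≤ 16 * T^2 * (1 + (s*κ)^2/2) * Real.exp (-(s^2/2) * κ^2) := by gcongr
    _ ≤ 16 * T^2 * Real.exp ((s^2/2) * κ^2) * Real.exp (-(s^2/2) * κ^2) := by gcongr
    _ = 16 * T^2 := by rw [mul_assoc, ← Real.exp_add]; simp

lemma ibp {s : ℝ} (hs : 0 < s) (y u : ℝ) (hu : u ≠ 0) :
    ∫ κ : ℝ, q s y κ * (Real.sin (κ*u) / u)^2 =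
      √π / s * (Real.exp (-((u-y)/s)^2) + Real.exp (-((u+y)/s)^2)) := by
  have hcosb : ∀ x : ℝ, |Real.cos x| ≤ 1 := Real.abs_cos_le_one
  have hsinb : ∀ x : ℝ, |Real.sin x| ≤ 1 := Real.abs_sin_le_one
  have hS : ∀ κ, |(Real.sin (κ*u) / u)^2| ≤ 1/u^2 := by
    intro κ
    rw [abs_of_nonneg (by positivity), div_pow]; gcongr; exact Real.sin_sq_le_one _
  -- integrability of the three functions
  have i1 : Integrable (fun κ : ℝ => (2 * Real.cos (2*κ*u) * Real.cos (2*κ*y)) * Real.exp (-(s^2) * κ^2)) := by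
    refine polyint hs _ (by fun_prop) 2 fun κ => ?_
    rw [abs_mul, abs_mul, abs_two]
    have := mul_le_mul (hcosb (2*κ*u)) (hcosb (2*κ*y)) (abs_nonneg _) zero_le_one
    nlinarith [sq_nonneg κ]
  have i2 : Integrable (fun κ : ℝ => q s y κ * (Real.sin (κ*u) / u)^2) := by
    have : Integrable (fun κ : ℝ => ((-4*y^2*Real.cos (2*κ*y) + 8*s^2*y*κ*Real.sin (2*κ*y) + (4*s^4*κ^2 - 2*s^2)*Real.cos (2*κ*y)) * (Real.sin (κ*u) / u)^2) * Real.exp (-(s^2) * κ^2)) := by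
      refine polyint hs _ (by fun_prop) ((4*y^2 + 8*s^2*|y| + 4*s^4 + 2*s^2)*(1/u^2)) fun κ => ?_
      rw [abs_mul]
      have b : |-4*y^2*Real.cos (2*κ*y) + 8*s^2*y*κ*Real.sin (2*κ*y) + (4*s^4*κ^2 - 2*s^2)*Real.cos (2*κ*y)| ≤ (4*y^2 + 8*s^2*|y| + 4*s^4 + 2*s^2)*(1+κ^2) := by
        have hk : |κ| ≤ 1 + κ^2 := by rw [← sq_abs κ]; nlinarith [sq_nonneg (|κ| - 1), abs_nonneg κ]
        have hk2 : κ^2 ≤ 1 + κ^2 := by linarith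
        have hk3 : 1 ≤ 1 + κ^2 := by nlinarith
        calc _ ≤ |-4*y^2*Real.cos (2*κ*y)| + |8*s^2*y*κ*Real.sin (2*κ*y)| + |(4*s^4*κ^2 - 2*s^2)*Real.cos (2*κ*y)| := abs_add_three _ _ _
          _ ≤ 4*y^2*(1+κ^2) + 8*s^2*|y| *(1+κ^2) + (4*s^4*(1+κ^2) + 2*s^2*(1+κ^2)) := by
            gcongr ?_ + ?_ + ?_
            · rw [abs_mul, abs_mul, abs_pow, sq_abs]; norm_num
              gcongr; exact (hcosb _).trans hk3
            · simp only [abs_mul, abs_pow, abs_of_pos hs]; norm_num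
              calc 8*s^2*|y| *|κ| * |Real.sin (2*κ*y)| ≤ 8*s^2*|y| *|κ| * 1 := by gcongr; exact hsinb _
                _ ≤ _ := by rw [mul_one]; gcongr
            · rw [abs_mul]
              calc |4*s^4*κ^2 - 2*s^2| * |Real.cos (2*κ*y)| ≤ |4*s^4*κ^2 - 2*s^2| * 1 := by gcongr; exact hcosb _
                _ ≤ |4*s^4*κ^2| + |2*s^2| := by rw [mul_one]; exact abs_sub _ _
                _ = 4*s^4*κ^2 + 2*s^2*1 := by rw [abs_of_nonneg (by positivity), abs_of_nonneg (by positivity), mul_one]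
                _ ≤ _ := by gcongr
          _ = _ := by ring
      calc _ ≤ ((4*y^2 + 8*s^2*|y| + 4*s^4 + 2*s^2)*(1+κ^2)) * (1/u^2) := by gcongr; exact hS κ
        _ = _ := by ring
    refine this.congr (Filter.Eventually.of_forall fun κ => ?_)
    simp only [q]; ring
  have i3 : Integrable (fun κ : ℝ => (Real.sin (2*κ*u) / u * Real.cos (2*κ*y) - (Real.sin (κ*u) / u)^2 * (-2*y*Real.sin (2*κ*y) - 2*s^2*κ*Real.cos (2*κ*y))) * Real.exp (-(s^2) * κ^2)) := by
    refine polyint hs _ (by fun_prop) (1/|u| + 1/u^2 * (2*|y| + 2*s^2)) fun κ => ?_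
    have hk : |κ| ≤ 1 + κ^2 := by rw [← sq_abs κ]; nlinarith [sq_nonneg (|κ| - 1), abs_nonneg κ]
    have hk3 : 1 ≤ 1 + κ^2 := by nlinarith
    refine (abs_sub _ _).trans ?_
    rw [abs_mul, abs_mul, abs_div, add_mul]
    gcongr ?_ + ?_
    · calc |Real.sin (2*κ*u)| / |u| * |Real.cos (2*κ*y)| ≤ 1 / |u| * 1 := by gcongr; exact hsinb _; exact hcosb _
        _ ≤ _ := by gcongr
    · rw [mul_assoc (1/u^2)]
      have hh : |-2*y*Real.sin (2*κ*y) - 2*s^2*κ*Real.cos (2*κ*y)| ≤ (2*|y| + 2*s^2) * (1+κ^2) := by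
        refine (abs_sub _ _).trans ?_
        simp only [abs_mul, abs_pow, abs_of_pos hs, abs_neg, abs_two]
        calc 2*|y| * |Real.sin (2*κ*y)| + 2*s^2*|κ| * |Real.cos (2*κ*y)| ≤ 2*|y| * (1+κ^2) + 2*s^2*(1+κ^2) * 1 := by
              gcongr
              · exact (hsinb _).trans hk3
              · exact hcosb _
          _ = _ := by ring
      exact mul_le_mul (hS κ) hh (abs_nonneg _) (by positivity)
  have hder : ∀ κ : ℝ, HasDerivAt (fun κ : ℝ => (Real.sin (2*κ*u) / u * Real.cos (2*κ*y) - (Real.sin (κ*u) / u)^2 * (-2*y*Real.sin (2*κ*y) - 2*s^2*κ*Real.cos (2*κ*y))) * Real.exp (-(s^2) * κ^2))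
      ((2 * Real.cos (2*κ*u) * Real.cos (2*κ*y)) * Real.exp (-(s^2) * κ^2) - q s y κ * (Real.sin (κ*u) / u)^2) κ := by
    intro κ
    have d0 : ∀ a : ℝ, HasDerivAt (fun κ : ℝ => 2*κ*a) (2*a) κ := by
      intro a; simpa using ((hasDerivAt_id κ).const_mul 2).mul_const a
    have d1 : HasDerivAt (fun κ : ℝ => κ*u) u κ := by simpa using (hasDerivAt_id κ).mul_const u
    have d2 : HasDerivAt (fun κ : ℝ => -(s^2)*κ^2) (-(s^2)*(2*κ)) κ := by simpa using (hasDerivAt_pow 2 κ).const_mul (-(s^2))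
    have d3 : HasDerivAt (fun κ : ℝ => 2*s^2*κ) (2*s^2) κ := by simpa using (hasDerivAt_id κ).const_mul (2*s^2)
    have D := (((((d0 u).sin).div_const u).mul ((d0 y).cos)).sub (((d1.sin.div_const u).pow 2).mul ((((d0 y).sin).const_mul (-2*y)).sub (d3.mul ((d0 y).cos))))).mul d2.exp
    refine D.congr_deriv ?_
    simp only [q, Pi.mul_apply, Pi.sub_apply, Pi.pow_apply, show 2 - 1 = 1 from rfl, pow_one, Nat.cast_ofNat]
    have hs2 : Real.sin (2*κ*u) = 2 * Real.sin (κ*u) * Real.cos (κ*u) := by rw [mul_assoc, Real.sin_two_mul]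
    rw [hs2]
    field_simp
    ring
  have h0 := integral_eq_zero_of_hasDerivAt_of_integrable hder (i1.sub i2) i3
  rw [integral_sub i1 i2, sub_eq_zero] at h0
  rw [← h0]
  have e : ∀ κ : ℝ, (2 * Real.cos (2*κ*u) * Real.cos (2*κ*y)) * Real.exp (-(s^2) * κ^2) =
      Real.cos (2*κ*(u-y)) * Real.exp (-(s^2) * κ^2) + Real.cos (2*κ*(u+y)) * Real.exp (-(s^2) * κ^2) := by
    intro κ
    rw [mul_sub, mul_add, Real.cos_sub, Real.cos_add]; ring
  have i4 : ∀ a : ℝ, Integrable (fun κ : ℝ => Real.cos (2*κ*a) * Real.exp (-(s^2) * κ^2)) := by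
    intro a
    refine polyint hs _ (by fun_prop) 1 fun κ => ?_
    have := hcosb (2*κ*a)
    nlinarith [sq_nonneg κ]
  simp_rw [e]
  rw [integral_add (i4 _) (i4 _), gaussR hs, gaussR hs]; ring
end VL

namespace VL

lemma polyint' {b : ℝ} (hb : 0 < b) (F : ℝ → ℝ) (hF : Measurable F) (M : ℝ) (hM : ∀ κ, |F κ| ≤ M * (1 + κ^2)) :
    Integrable (fun κ => F κ * Real.exp (-b * κ^2)) := by
  have := polyint (s := √b) (by positivity) F hF M hM
  rwa [Real.sq_sqrt hb.le] at this

lemma S_le (κ u : ℝ) : (Real.sin (κ*u) / u)^2 ≤ 2*κ^2/(1+(κ*u)^2) := by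
  rcases eq_or_ne κ 0 with rfl | hκ
  · simp
  have : (Real.sin (κ*u) / u)^2 = κ^2 * (Real.sin (κ*u) / (κ*u))^2 := by
    rcases eq_or_ne u 0 with rfl | hu
    · simp
    · field_simp
  rw [this]
  calc _ ≤ κ^2 * (2/(1+(κ*u)^2)) := by gcongr; exact sinc_le _
    _ = _ := by ring

lemma S_le' (κ u : ℝ) : (Real.sin (κ*u) / u)^2 ≤ 2*(1+κ^2) * (1/(1+u^2)) := by
  refine (S_le κ u).trans ?_
  rw [mul_one_div, div_le_div_iff₀ (by positivity) (by positivity)]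
  nlinarith [sq_nonneg (κ*u), sq_nonneg (κ*(κ*u)), sq_nonneg κ, sq_nonneg u]

section
variable {h : ℝ → ℝ} {C δ : ℝ}

lemma h_div_int (hm : Measurable h) (hC : 0 ≤ C) (hδ : δ ≤ 1/2)
    (hb : ∀ u, |h u| ≤ C * (1 + |u|)^δ + ell u) : Integrable (fun u => h u * (1/(1+u^2))) := by
  refine ((int_pow.const_mul C).add ell_integrable).mono' (Measurable.aestronglyMeasurable (by fun_prop)) (Filter.Eventually.of_forall fun u => ?_)
  have hu : 0 < 1 + u^2 := by positivity
  rw [norm_mul, Real.norm_eq_abs, Real.norm_of_nonneg (show 0 ≤ 1/(1+u^2) by positivity), mul_one_div]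
  simp only [Pi.add_apply]
  rw [div_le_iff₀ hu, add_mul, mul_assoc, div_mul_cancel₀ _ hu.ne']
  have h1 : (1+|u|)^δ ≤ (1+|u|)^(1/2:ℝ) := Real.rpow_le_rpow_of_exponent_le (by linarith [abs_nonneg u]) hδ
  have h2 : C * (1+|u|)^δ ≤ C * (1+|u|)^(1/2:ℝ) := by gcongr
  nlinarith [hb u, ell_nonneg u, mul_nonneg (ell_nonneg u) (sq_nonneg u)]

lemma S_int (hi : Integrable (fun u => h u * (1/(1+u^2)))) (hm : Measurable h) (κ : ℝ) :
    Integrable (fun u => (Real.sin (κ*u) / u)^2 * h u) := by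
  refine ((hi.norm).const_mul (2*(1+κ^2))).mono' (Measurable.aestronglyMeasurable (by fun_prop)) (Filter.Eventually.of_forall fun u => ?_)
  rw [norm_mul, norm_mul, Real.norm_of_nonneg (show 0 ≤ (Real.sin (κ*u) / u)^2 by positivity), Real.norm_of_nonneg (show 0 ≤ 1/(1+u^2) by positivity)]
  calc _ ≤ (2*(1+κ^2) * (1/(1+u^2))) * ‖h u‖ := by gcongr; exact S_le' κ u
    _ = _ := by ring

lemma gauss_le {s : ℝ} (hs : 0 < s) (y u : ℝ) : Real.exp (-((u-y)/s)^2) ≤ (1+2*y^2+2*s^2) * (1/(1+u^2)) := by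
  rw [mul_one_div, le_div_iff₀ (by positivity)]
  have h1 : 1 + u^2 ≤ 1 + 2*y^2 + 2*s^2*((u-y)/s)^2 := by
    rw [div_pow, mul_assoc, mul_div_cancel₀ _ (by positivity)]
    nlinarith [sq_nonneg (u - 2*y)]
  set x := ((u-y)/s)^2
  have hx : 0 ≤ x := by positivity
  have h2 : Real.exp (-x) * x ≤ 1 := by
    have := Real.add_one_le_exp x
    rw [Real.exp_neg, inv_mul_le_iff₀ (Real.exp_pos x)]; linarith
  have h3 : Real.exp (-x) ≤ 1 := Real.exp_le_one_iff.2 (by linarith)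
  have h4 : 0 < Real.exp (-x) := Real.exp_pos _
  calc Real.exp (-x) * (1+u^2) ≤ Real.exp (-x) * (1 + 2*y^2 + 2*s^2*x) := by gcongr
    _ = Real.exp (-x) * (1+2*y^2) + 2*s^2*(Real.exp (-x)*x) := by ring
    _ ≤ 1 * (1+2*y^2) + 2*s^2*1 := by gcongr
    _ = _ := by ring

lemma gint (hi : Integrable (fun u => h u * (1/(1+u^2)))) (hm : Measurable h) {s : ℝ} (hs : 0 < s) (y : ℝ) :
    Integrable (fun u => Real.exp (-((u-y)/s)^2) * h u) := by
  refine ((hi.norm).const_mul (1+2*y^2+2*s^2)).mono' (Measurable.aestronglyMeasurable (by fun_prop)) (Filter.Eventually.of_forall fun u => ?_)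
  rw [norm_mul, norm_mul, Real.norm_of_nonneg (Real.exp_pos _).le, Real.norm_of_nonneg (show 0 ≤ 1/(1+u^2) by positivity)]
  calc _ ≤ ((1+2*y^2+2*s^2) * (1/(1+u^2))) * ‖h u‖ := by gcongr; exact gauss_le hs y u
    _ = _ := by ring

/-- Gaussian average -/
noncomputable def E (s : ℝ) (h : ℝ → ℝ) (y : ℝ) : ℝ := ∫ z : ℝ, Real.exp (-z^2) * h (y + s*z)

lemma comp_aff {s : ℝ} (hs : 0 < s) (y : ℝ) (g : ℝ → ℝ) : ∫ z : ℝ, g (y + s*z) = s⁻¹ * ∫ u, g u := by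
  have h1 := Measure.integral_comp_mul_left (fun w => g (y + w)) s
  rw [h1, integral_add_left_eq_self g y, abs_of_pos (by positivity), smul_eq_mul]

lemma aff_gauss {s : ℝ} (hs : 0 < s) (y z : ℝ) : (y + s*z - y)/s = z := by field_simp; ring

lemma E_eq {s : ℝ} (hs : 0 < s) (y : ℝ) : E s h y = s⁻¹ * ∫ u, Real.exp (-((u-y)/s)^2) * h u := by
  rw [← comp_aff hs y (fun u => Real.exp (-((u-y)/s)^2) * h u)]
  unfold E
  simp_rw [aff_gauss hs]

lemma E_int (hi : Integrable (fun u => h u * (1/(1+u^2)))) (hm : Measurable h) {s : ℝ} (hs : 0 < s) (y : ℝ) :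
    Integrable (fun z : ℝ => Real.exp (-z^2) * h (y + s*z)) := by
  have h1 := gint hi hm hs y
  have h2 := (h1.comp_add_left y).comp_mul_left' hs.ne'
  simp_rw [aff_gauss hs] at h2
  exact h2

/-- the transform -/
noncomputable def R (h : ℝ → ℝ) (κ : ℝ) : ℝ := ∫ u : ℝ, (Real.sin (κ*u) / u)^2 * h u

lemma Eid (hi : Integrable (fun u => h u * (1/(1+u^2)))) (hm : Measurable h) {s T : ℝ} (hs : 0 < s) (hsT : s ≤ T) (y : ℝ) (hy : |y| ≤ T) :
    ∫ κ : ℝ, q s y κ * R h κ = √π * (E s h y + E s h (-y)) := by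
  have key : Integrable (Function.uncurry (fun κ u : ℝ => q s y κ * ((Real.sin (κ*u) / u)^2 * h u))) (volume.prod volume) := by
    have i1 : Integrable (fun κ : ℝ => (32 * T^2 * (1+κ^2)) * Real.exp (-(s^2/2) * κ^2)) :=
      polyint' (by positivity) _ (by fun_prop) (32*T^2) (fun κ => by rw [abs_of_nonneg (by positivity)])
    refine (i1.mul_prod hi.norm).mono' (Measurable.aestronglyMeasurable (by unfold Function.uncurry q; fun_prop)) (Filter.Eventually.of_forall fun ⟨κ, u⟩ => ?_)
    simp only [Function.uncurry, norm_mul]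
    rw [Real.norm_of_nonneg (show 0 ≤ (Real.sin (κ*u) / u)^2 by positivity), Real.norm_of_nonneg (show 0 ≤ 1/(1+u^2) by positivity), Real.norm_eq_abs (q s y κ)]
    calc _ ≤ (16 * T^2 * Real.exp (-(s^2/2) * κ^2)) * ((2*(1+κ^2) * (1/(1+u^2))) * ‖h u‖) := by
          gcongr
          · exact q_bound hs hsT hy
          · exact S_le' κ u
      _ = _ := by ring
  have h1 := integral_integral_swap key
  simp_rw [integral_const_mul] at h1
  unfold R
  rw [h1]
  have h2 : ∫ u : ℝ, ∫ κ : ℝ, q s y κ * ((Real.sin (κ*u) / u)^2 * h u)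
     = ∫ u : ℝ, √π / s * (Real.exp (-((u-y)/s)^2) * h u + Real.exp (-((u-(-y))/s)^2) * h u) := by
    refine integral_congr_ae ?_
    have : ∀ᵐ u : ℝ, u ≠ 0 := by simp [ae_iff]
    filter_upwards [this] with u hu
    have e : ∀ κ : ℝ, q s y κ * ((Real.sin (κ*u) / u)^2 * h u) = (q s y κ * (Real.sin (κ*u) / u)^2) * h u := fun κ => by ring
    simp_rw [e]
    rw [integral_mul_const, ibp hs y u hu, sub_neg_eq_add]; ring
  rw [h2, integral_const_mul, integral_add (gint hi hm hs y) (gint hi hm hs (-y)), E_eq hs, E_eq hs]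
  field_simp

lemma loc_int (hm : Measurable h) (hC : 0 ≤ C) (hδ0 : 0 < δ)
    (hb : ∀ u, |h u| ≤ C * (1 + |u|)^δ + ell u) (M a b : ℝ) (ha : |a| ≤ M) (hbM : |b| ≤ M) :
    IntervalIntegrable h volume a b ∧ |∫ x in a..b, h x| ≤ |b - a| * (C * (1+M)^δ) + ∫ u, ell u := by
  have hbd : ∀ x ∈ Set.uIoc a b, ‖h x‖ ≤ C * (1+M)^δ + ell x := by
    intro x hx
    have hx' : |x| ≤ M := by
      rw [Set.mem_uIoc] at hx
      rw [abs_le] at *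
      rcases hx with h | h <;> constructor <;> linarith [h.1, h.2]
    refine (hb x).trans ?_
    gcongr
  have imaj : IntegrableOn (fun x => C * (1+M)^δ + ell x) (Set.uIoc a b) :=
    (integrableOn_const (by simp [Set.uIoc])).add ell_integrable.integrableOn
  have ih : IntegrableOn h (Set.uIoc a b) := by
    refine Integrable.mono' imaj hm.aestronglyMeasurable ?_
    filter_upwards [ae_restrict_mem measurableSet_uIoc] with x hx using hbd x hx
  refine ⟨intervalIntegrable_iff.2 ih, ?_⟩
  refine (intervalIntegral.norm_integral_le_integral_norm_uIoc (f := h) (a := a) (b := b) (μ := volume)).trans ?_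
  refine (setIntegral_mono_on ih.norm imaj measurableSet_uIoc hbd).trans ?_
  have icst : IntegrableOn (fun _ : ℝ => C * (1+M)^δ) (Set.uIoc a b) := integrableOn_const (by simp [Set.uIoc])
  rw [integral_add icst ell_integrable.integrableOn]
  refine add_le_add ?_ (setIntegral_le_integral ell_integrable (Filter.Eventually.of_forall ell_nonneg))
  rw [setIntegral_const, smul_eq_mul]
  simp [Set.uIoc, measureReal_def, Real.volume_Ioc, max_sub_min_eq_abs']
  rw [abs_sub_comm]

lemma fub (hi : Integrable (fun u => h u * (1/(1+u^2)))) (hm : Measurable h) {s T : ℝ} (hs : 0 < s) (hT : 0 < T) :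
    IntervalIntegrable (E s h) volume (-T) T ∧
    ∫ y in (-T)..T, E s h y = ∫ z : ℝ, Real.exp (-z^2) * ∫ y in (-T)..T, h (y + s*z) := by
  have hle : -T ≤ T := by linarith
  have hmF : Measurable (Function.uncurry (fun y z : ℝ => Real.exp (-z^2) * h (y + s*z))) := by
    unfold Function.uncurry; fun_prop
  have key : Integrable (Function.uncurry (fun y z : ℝ => Real.exp (-z^2) * h (y + s*z))) ((volume.restrict (Set.Ioc (-T) T)).prod volume) := by
    rw [integrable_prod_iff hmF.aestronglyMeasurable]
    refine ⟨Filter.Eventually.of_forall fun y => E_int hi hm hs y, ?_⟩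
    have hc : IntegrableOn (fun _ : ℝ => s⁻¹ * ((1+2*T^2+2*s^2) * ∫ u, ‖h u * (1/(1+u^2))‖)) (Set.Ioc (-T) T) :=
      integrableOn_const (by simp)
    refine Integrable.mono' hc (hmF.norm.aestronglyMeasurable.integral_prod_right') ?_
    filter_upwards [ae_restrict_mem measurableSet_Ioc] with y hy
    rw [Real.norm_of_nonneg (integral_nonneg fun _ => norm_nonneg _)]
    have e : ∀ z : ℝ, ‖Function.uncurry (fun y z : ℝ => Real.exp (-z^2) * h (y + s*z)) (y, z)‖ = Real.exp (-z^2) * (fun u => |h u|) (y + s*z) := by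
      intro z; simp [Function.uncurry, Real.abs_exp]
    simp_rw [e]
    have e2 := E_eq (h := fun u => |h u|) hs y
    unfold E at e2
    rw [e2]
    have hy2 : y^2 ≤ T^2 := sq_le_sq' hy.1.le hy.2
    gcongr s⁻¹ * ?_
    rw [← integral_const_mul]
    refine integral_mono_of_nonneg (Filter.Eventually.of_forall fun u => by positivity) (hi.norm.const_mul _) (Filter.Eventually.of_forall fun u => ?_)
    simp only [norm_mul]
    rw [Real.norm_of_nonneg (show 0 ≤ 1/(1+u^2) by positivity), Real.norm_eq_abs]
    calc _ ≤ ((1+2*y^2+2*s^2) * (1/(1+u^2))) * |h u| := by gcongr; exact gauss_le hs y u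
      _ ≤ ((1+2*T^2+2*s^2) * (1/(1+u^2))) * |h u| := by gcongr
      _ = _ := by ring
  constructor
  · rw [intervalIntegrable_iff_integrableOn_Ioc_of_le hle]
    exact key.integral_prod_left
  · rw [intervalIntegral.integral_of_le hle]
    unfold E
    rw [integral_integral_swap key]
    simp_rw [intervalIntegral.integral_of_le hle, integral_const_mul]

lemma shift_bd (hm : Measurable h) (hC : 0 ≤ C) (hδ0 : 0 < δ)
    (hb : ∀ u, |h u| ≤ C * (1 + |u|)^δ + ell u) {T : ℝ} (hT : 0 < T) (a : ℝ) :
    |(∫ y in (-T)..T, h y) - ∫ y in (-T)..T, h (y + a)| ≤ 2 * (|a| * (C * (1+(T+|a|))^δ) + ∫ u, ell u) := by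
  rw [intervalIntegral.integral_comp_add_right]
  have hT' : |T| = T := abs_of_pos hT
  have b1 : |T| ≤ T + |a| := by rw [hT']; linarith [abs_nonneg a]
  have b2 : |-T| ≤ T + |a| := by rw [abs_neg]; exact b1
  have b3 : |T + a| ≤ T + |a| := (abs_add_le _ _).trans (by rw [hT'])
  have b4 : |-T + a| ≤ T + |a| := (abs_add_le _ _).trans (by rw [abs_neg, hT'])
  have L := fun x y hx hy => loc_int hm hC hδ0 hb (T+|a|) x y hx hy
  have e := intervalIntegral.integral_interval_sub_interval_comm (L _ _ b2 b1).1 (L _ _ b4 b3).1 (L _ _ b2 b4).1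
  rw [e]
  have c1 := (L _ _ b2 b4).2
  have c2 := (L _ _ b1 b3).2
  rw [show -T + a - -T = a by ring] at c1
  rw [show T + a - T = a by ring] at c2
  refine (abs_sub _ _).trans ?_
  linarith

lemma main_ineq (hm : Measurable h) (hC : 0 ≤ C) (hδ0 : 0 < δ) (hδ : δ ≤ 1/2)
    (hb : ∀ u, |h u| ≤ C * (1 + |u|)^δ + ell u) {s T : ℝ} (hs : 0 < s) (hsT : s ≤ T) (hT : 1 ≤ T)
    (V : ℝ → ℝ) (hV : Integrable V)
    (hRV : ∀ κ, κ ≠ 0 → |R h κ| * Real.exp (-(s^2/2) * κ^2) ≤ V κ) :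
    |∫ y in (-T)..T, h y| ≤ 16 * T^3 * (∫ κ, V κ)
      + (4 * s * C * T^δ * (∫ z : ℝ, (|z| * (1+|z|)) * Real.exp (-1 * z^2)) + 2 * (∫ u, ell u) * √π) := by
  have hi := h_div_int hm hC hδ hb
  have hT0 : 0 < T := by linarith
  have hpi : 1 ≤ √π := Real.one_le_sqrt.2 (by linarith [Real.pi_gt_three])
  set J := ∫ κ, V κ with hJ
  obtain ⟨hEi, hEf⟩ := fub hi hm hs hT0
  have hE : ∀ y, |y| ≤ T → |E s h y + E s h (-y)| ≤ 16 * T^2 * J := by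
    intro y hy
    have h1 := Eid hi hm hs hsT y hy
    have h2 : |∫ κ : ℝ, q s y κ * R h κ| ≤ 16 * T^2 * J := by
      rw [hJ, ← integral_const_mul]
      rw [← Real.norm_eq_abs]
      refine norm_integral_le_of_norm_le (hV.const_mul _) ?_
      have : ∀ᵐ u : ℝ, u ≠ 0 := by simp [ae_iff]
      filter_upwards [this] with κ hκ
      rw [Real.norm_eq_abs, abs_mul]
      calc _ ≤ (16 * T^2 * Real.exp (-(s^2/2) * κ^2)) * |R h κ| := by
            gcongr
            exact q_bound hs hsT hy
        _ = 16 * T^2 * (|R h κ| * Real.exp (-(s^2/2) * κ^2)) := by ring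
        _ ≤ _ := by gcongr; exact hRV κ hκ
    rw [h1, abs_mul, abs_of_nonneg (Real.sqrt_nonneg _)] at h2
    nlinarith [abs_nonneg (E s h y + E s h (-y))]
  have hEI : |∫ y in (-T)..T, E s h y| ≤ 16 * T^3 * J := by
    have e1 : ∫ y in (-T)..T, E s h (-y) = ∫ y in (-T)..T, E s h y := by
      rw [intervalIntegral.integral_comp_neg]; simp
    have hEi' : IntervalIntegrable (fun y => E s h (-y)) volume (-T) T := by
      have := IntervalIntegrable.comp_sub_left hEi 0
      simpa using this.symm
    have e2 := intervalIntegral.integral_add hEi hEi'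
    rw [e1] at e2
    have h3 := intervalIntegral.norm_integral_le_of_norm_le_const (a := -T) (b := T) (C := 16 * T^2 * J)
      (f := fun y => E s h y + E s h (-y)) (by
        intro y hy
        rw [Set.uIoc_of_le (by linarith)] at hy
        exact hE y (abs_le.2 ⟨hy.1.le, hy.2⟩))
    rw [e2, Real.norm_eq_abs, ← two_mul, abs_mul, abs_two, show T - -T = 2*T by ring, abs_of_pos (show 0 < 2*T by linarith)] at h3
    nlinarith
  have hgi : Integrable (fun z : ℝ => Real.exp (-z^2)) := by
    simpa using integrable_exp_neg_mul_sq (b := 1) one_pos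
  have hgv : ∫ z : ℝ, Real.exp (-z^2) = √π := by simpa using integral_gaussian 1
  have hk : Integrable (fun z : ℝ => (|z| * (1+|z|)) * Real.exp (-1 * z^2)) := by
    refine polyint' one_pos _ (by fun_prop) 2 fun z => ?_
    rw [abs_of_nonneg (by positivity), ← sq_abs z]
    nlinarith [sq_nonneg (|z| - 1)]
  have hsb : ∀ z : ℝ, |(∫ y in (-T)..T, h y) - ∫ y in (-T)..T, h (y + s*z)| ≤ 4*s*C*T^δ * (|z| * (1+|z|)) + 2 * ∫ u, ell u := by
    intro z
    refine (shift_bd hm hC hδ0 hb hT0 (s*z)).trans ?_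
    rw [abs_mul, abs_of_pos hs]
    have hz := abs_nonneg z
    have r1 : (1 + (T + s*|z|))^δ ≤ 2 * T^δ * (1+|z|) := by
      calc (1 + (T + s*|z|))^δ ≤ (2 * T * (1+|z|))^δ := by
            gcongr; nlinarith
        _ = 2^δ * T^δ * (1+|z|)^δ := by rw [Real.mul_rpow (by positivity) (by positivity), Real.mul_rpow (by positivity) (by positivity)]
        _ ≤ 2^(1:ℝ) * T^δ * (1+|z|)^(1:ℝ) := by
            gcongr
            · norm_num
            · linarith
            · linarith
            · linarith
        _ = _ := by simp
    have r2 : s * |z| * (C * (1 + (T + s*|z|))^δ) ≤ s * |z| * (C * (2 * T^δ * (1+|z|))) := by gcongr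
    linarith
  have hdiff : |√π * (∫ y in (-T)..T, h y) - ∫ y in (-T)..T, E s h y| ≤
      4 * s * C * T^δ * (∫ z : ℝ, (|z| * (1+|z|)) * Real.exp (-1 * z^2)) + 2 * (∫ u, ell u) * √π := by
    have mz : Integrable (fun z : ℝ => Real.exp (-z^2) * ∫ y in (-T)..T, h (y + s*z)) := by
      have i5 := (hk.const_mul (4*s*C*T^δ)).add (hgi.const_mul (2 * (∫ u, ell u) + |∫ y in (-T)..T, h y|))
      refine i5.mono' ?_ (Filter.Eventually.of_forall fun z => ?_)
      · have hmm : StronglyMeasurable (fun z : ℝ => ∫ y in (-T)..T, h (y + s*z)) := by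
          simp_rw [intervalIntegral.integral_of_le (show -T ≤ T by linarith)]
          have hmF : StronglyMeasurable (Function.uncurry (fun z y : ℝ => h (y + s*z))) := by
            refine Measurable.stronglyMeasurable ?_
            unfold Function.uncurry; fun_prop
          exact hmF.integral_prod_right
        exact (Measurable.aestronglyMeasurable (by fun_prop)).mul hmm.aestronglyMeasurable
      · have h6 := hsb z
        have h7 : |∫ y in (-T)..T, h (y + s*z)| ≤ 4*s*C*T^δ * (|z| * (1+|z|)) + 2 * (∫ u, ell u) + |∫ y in (-T)..T, h y| := by
          have := abs_sub_abs_le_abs_sub (∫ y in (-T)..T, h (y + s*z)) (∫ y in (-T)..T, h y)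
          rw [abs_sub_comm] at this
          linarith
        simp only [Pi.add_apply, neg_mul, one_mul]
        rw [norm_mul, Real.norm_of_nonneg (Real.exp_pos _).le, Real.norm_eq_abs]
        have h8 := mul_le_mul_of_nonneg_left h7 (Real.exp_pos (-z^2)).le
        linarith
    have e3 : √π * (∫ y in (-T)..T, h y) - ∫ y in (-T)..T, E s h y =
        ∫ z : ℝ, (Real.exp (-z^2) * (∫ y in (-T)..T, h y) - Real.exp (-z^2) * ∫ y in (-T)..T, h (y + s*z)) := by
      rw [integral_sub (hgi.mul_const _) mz, integral_mul_const, hgv, hEf]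
    have e4 : 4 * s * C * T^δ * (∫ z : ℝ, (|z| * (1+|z|)) * Real.exp (-1 * z^2)) + 2 * (∫ u, ell u) * √π
        = ∫ z : ℝ, (4 * s * C * T^δ * ((|z| * (1+|z|)) * Real.exp (-1 * z^2)) + 2 * (∫ u, ell u) * Real.exp (-z^2)) := by
      rw [integral_add (hk.const_mul _) (hgi.const_mul _), integral_const_mul, integral_const_mul, hgv]
    have i7 : Integrable (fun z : ℝ => 4 * s * C * T^δ * ((|z| * (1+|z|)) * Real.exp (-1 * z^2)) + 2 * (∫ u, ell u) * Real.exp (-z^2)) :=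
      (hk.const_mul _).add (hgi.const_mul _)
    rw [e3, e4, ← Real.norm_eq_abs]
    refine norm_integral_le_of_norm_le i7 (Filter.Eventually.of_forall fun z => ?_)
    rw [← mul_sub, norm_mul, Real.norm_of_nonneg (Real.exp_pos _).le, Real.norm_eq_abs]
    have h8 := mul_le_mul_of_nonneg_left (hsb z) (Real.exp_pos (-z^2)).le
    simp only [neg_mul, one_mul]
    linarith
  have h10 : |√π * (∫ y in (-T)..T, h y)| ≤ 16 * T^3 * J + (4 * s * C * T^δ * (∫ z : ℝ, (|z| * (1+|z|)) * Real.exp (-1 * z^2)) + 2 * (∫ u, ell u) * √π) := by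
    have := abs_sub_abs_le_abs_sub (√π * (∫ y in (-T)..T, h y)) (∫ y in (-T)..T, E s h y)
    linarith
  rw [abs_mul, abs_of_nonneg (Real.sqrt_nonneg _)] at h10
  refine le_trans ?_ h10
  exact le_mul_of_one_le_left (abs_nonneg _) hpi
end
end VL

namespace VL

lemma R_bd {f : ℝ → ℝ} {Cf δ : ℝ} (hCf : 0 ≤ Cf) (hδ0 : 0 < δ) (hδ : δ ≤ 1/2)
    (hf : ∀ u, |f u| ≤ Cf * (1+|u|)^δ) {κ : ℝ} (hκ : 0 < κ) :
    |R f κ| ≤ 2 * Cf * κ * (1+1/κ)^δ * ∫ v : ℝ, (1 + |v|) ^ (1/2 : ℝ) / (1 + v^2) := by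
  have i1 := (int_pow.comp_mul_left' hκ.ne').const_mul (2*κ^2*Cf*(1+1/κ)^δ)
  have e := Measure.integral_comp_mul_left (fun v : ℝ => (1 + |v|) ^ (1/2 : ℝ) / (1 + v^2)) κ
  have e2 : 2 * Cf * κ * (1+1/κ)^δ * ∫ v : ℝ, (1 + |v|) ^ (1/2 : ℝ) / (1 + v^2) =
      ∫ u : ℝ, (2*κ^2*Cf*(1+1/κ)^δ) * ((1 + |κ*u|) ^ (1/2 : ℝ) / (1 + (κ*u)^2)) := by
    rw [integral_const_mul, e, abs_of_pos (by positivity), smul_eq_mul]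
    field_simp
  rw [e2]
  unfold R
  rw [← Real.norm_eq_abs]
  refine norm_integral_le_of_norm_le i1 (Filter.Eventually.of_forall fun u => ?_)
  rw [norm_mul, Real.norm_of_nonneg (by positivity), Real.norm_eq_abs]
  have h1 : 1 + |u| ≤ (1+1/κ) * (1+|κ*u|) := by
    rw [abs_mul, abs_of_pos hκ]
    have : (1+1/κ) * (1+κ*|u|) = 1 + κ*|u| + 1/κ + |u| := by field_simp; ring
    rw [this]
    have : 0 < 1/κ := by positivity
    have : 0 ≤ κ*|u| := by positivity
    linarith
  have h2 : (1+|u|)^δ ≤ (1+1/κ)^δ * (1+|κ*u|)^(1/2:ℝ) := by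
    calc (1+|u|)^δ ≤ ((1+1/κ) * (1+|κ*u|))^δ := by gcongr
      _ = (1+1/κ)^δ * (1+|κ*u|)^δ := Real.mul_rpow (by positivity) (by positivity)
      _ ≤ _ := by
        gcongr
        linarith [abs_nonneg (κ*u)]
  calc _ ≤ (2*κ^2/(1+(κ*u)^2)) * (Cf * ((1+1/κ)^δ * (1+|κ*u|)^(1/2:ℝ))) := by
        gcongr
        · exact S_le κ u
        · exact (hf u).trans (by gcongr)
    _ = _ := by ring

lemma f0_bd (B : ℝ) {δ : ℝ} (hδ0 : 0 < δ) (u : ℝ) :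
    |f0 B u| ≤ (1/δ + |1 + (B - 2 + eulerMascheroniConstant + Real.log 2)|) * (1+|u|)^δ + ell u := by
  unfold f0
  set A := 1 + (B - 2 + eulerMascheroniConstant + Real.log 2) with hA
  rw [add_assoc, ← hA, abs_div, abs_two]
  have h1 := abs_log_le hδ0 u
  have h2 := abs_add_le (Real.log u) A
  have h3 : 1 ≤ (1+|u|)^δ := Real.one_le_rpow (by linarith [abs_nonneg u]) hδ0.le
  have h4 : |A| ≤ |A| * (1+|u|)^δ := le_mul_of_one_le_right (abs_nonneg _) h3
  have h5 : (1+|u|)^δ / δ = 1/δ * (1+|u|)^δ := by ring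
  have h6 : 0 ≤ 1/δ * (1+|u|)^δ := by positivity
  rw [div_le_iff₀ two_pos]
  nlinarith [ell_nonneg u, abs_nonneg A]

lemma R_even (h : ℝ → ℝ) (κ : ℝ) : R h κ = R h |κ| := by
  rcases abs_choice κ with e | e
  · rw [e]
  · rw [e]; unfold R; congr 1; ext u; rw [neg_mul, Real.sin_neg, neg_div, neg_sq]

lemma R_triv {f : ℝ → ℝ} (hmf : Measurable f) {Cf δ : ℝ} (B : ℝ) (hCf : 0 ≤ Cf) (hδ0 : 0 < δ) (hδ : δ ≤ 1/2)
    (hf : ∀ u, |f u| ≤ Cf * (1+|u|)^δ) :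
    (∀ κ, 0 < κ → R (fun u => f u - f0 B u) κ = R f κ - π/2*κ*(Real.log (1/κ) + B)) ∧
    ∃ C', 0 < C' ∧ ∀ κ, 0 < κ → |R (fun u => f u - f0 B u) κ| ≤ C' * (1+κ^2) ∧
      (κ ≤ 1 → |R (fun u => f u - f0 B u) κ| ≤ C' * κ^(1-δ)) := by
  have hm0 : Measurable (f0 B) := by unfold f0; fun_prop
  have i1 : Integrable (fun u => f u * (1/(1+u^2))) :=
    h_div_int hmf hCf hδ (fun u => (hf u).trans (by linarith [ell_nonneg u]))
  have i2 : Integrable (fun u => f0 B u * (1/(1+u^2))) :=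
    h_div_int hm0 (by positivity) hδ (f0_bd B hδ0)
  have hR : ∀ κ, 0 < κ → R (fun u => f u - f0 B u) κ = R f κ - π/2*κ*(Real.log (1/κ) + B) := by
    intro κ hκ
    rw [← Rf0 B κ hκ]
    unfold R
    simp_rw [mul_sub]
    rw [integral_sub (S_int i1 hmf κ) (S_int i2 hm0 κ)]
  refine ⟨hR, ?_⟩
  set P := ∫ v : ℝ, (1 + |v|) ^ (1/2 : ℝ) / (1 + v^2) with hP
  have hP0 : 0 ≤ P := integral_nonneg fun v => by positivity
  have hpi := Real.pi_le_four
  have hpi0 := Real.pi_pos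
  have hδi : 0 < 1/δ := by positivity
  have hB := abs_nonneg B
  refine ⟨4*Cf*P + 2*(1/δ+|B|+1), by positivity, fun κ hκ => ?_⟩
  have hf1 := R_bd hCf hδ0 hδ hf hκ
  rw [← hP] at hf1
  have htri : |R (fun u => f u - f0 B u) κ| ≤ |R f κ| + 2*κ*(|Real.log κ| + |B|) := by
    rw [hR κ hκ]
    refine (abs_sub _ _).trans ?_
    gcongr
    rw [abs_mul, abs_of_pos (by positivity), one_div, Real.log_inv]
    have : |-Real.log κ + B| ≤ |Real.log κ| + |B| := by
      have := abs_add_le (-Real.log κ) B; rwa [abs_neg] at this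
    calc π/2*κ*|-Real.log κ + B| ≤ 2*κ*|-Real.log κ + B| := by gcongr; linarith
      _ ≤ _ := by gcongr
  have small : κ ≤ 1 → |R (fun u => f u - f0 B u) κ| ≤ (4*Cf*P + 2*(1/δ+|B|+1)) * κ^(1-δ) := by
    intro h1
    have hk : κ^(1-δ) = κ * κ^(-δ) := by
      rw [sub_eq_add_neg, Real.rpow_add hκ, Real.rpow_one]
    have k1 : 1 ≤ κ^(-δ) := Real.one_le_rpow_of_pos_of_le_one_of_nonpos hκ h1 (by linarith)
    have k2 : (1+1/κ)^δ ≤ 2 * κ^(-δ) := by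
      calc (1+1/κ)^δ ≤ (2 * κ⁻¹)^δ := by
            gcongr
            rw [one_div]; have := (one_le_inv₀ hκ).2 h1; linarith
        _ = 2^δ * κ^(-δ) := by
            rw [Real.mul_rpow (by norm_num) (by positivity), Real.inv_rpow hκ.le, Real.rpow_neg hκ.le]
        _ ≤ 2^(1:ℝ) * κ^(-δ) := by gcongr <;> linarith
        _ = _ := by rw [Real.rpow_one]
    have k3 : |Real.log κ| ≤ 1/δ * κ^(-δ) := by
      rw [abs_of_nonpos (Real.log_nonpos hκ.le h1), ← Real.log_inv]
      have := Real.log_le_rpow_div (x := κ⁻¹) (by positivity) hδ0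
      rw [Real.inv_rpow hκ.le, ← Real.rpow_neg hκ.le] at this
      calc _ ≤ _ := this
        _ = _ := by ring
    have k4 : |B| ≤ |B| * κ^(-δ) := le_mul_of_one_le_right hB k1
    calc |R (fun u => f u - f0 B u) κ| ≤ 2*Cf*κ*(1+1/κ)^δ*P + 2*κ*(|Real.log κ| + |B|) := htri.trans (by linarith)
      _ ≤ 2*Cf*κ*(2*κ^(-δ))*P + 2*κ*(1/δ * κ^(-δ) + |B| * κ^(-δ)) := by gcongr
      _ = (4*Cf*P + 2*(1/δ+|B|)) * κ^(1-δ) := by rw [hk]; ring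
      _ ≤ _ := mul_le_mul_of_nonneg_right (by linarith) (by positivity)
  refine ⟨?_, small⟩
  rcases le_total κ 1 with h1 | h1
  · refine (small h1).trans ?_
    gcongr
    have : κ^(1-δ) ≤ 1 := Real.rpow_le_one hκ.le h1 (by linarith)
    nlinarith
  · have k2 : (1+1/κ)^δ ≤ 2 := by
      have : 1/κ ≤ 1 := by rw [div_le_one hκ]; exact h1
      calc (1+1/κ)^δ ≤ 2^δ := by gcongr; linarith
        _ ≤ 2^(1:ℝ) := by gcongr <;> linarith
        _ = 2 := Real.rpow_one 2
    have k3 : |Real.log κ| ≤ κ := by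
      rw [abs_of_nonneg (Real.log_nonneg h1)]
      linarith [Real.log_le_sub_one_of_pos hκ]
    have k4 : κ ≤ 1 + κ^2 := by nlinarith
    have k5 : κ*κ ≤ 1 + κ^2 := by nlinarith
    calc |R (fun u => f u - f0 B u) κ| ≤ 2*Cf*κ*(1+1/κ)^δ*P + 2*κ*(|Real.log κ| + |B|) := htri.trans (by linarith)
      _ ≤ 2*Cf*κ*2*P + 2*κ*(κ + |B|) := by gcongr
      _ = (4*Cf*P + 2*|B|) * κ + 2 * (κ*κ) := by ring
      _ ≤ (4*Cf*P + 2*|B|) * (1+κ^2) + 2 * (1+κ^2) := by gcongr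
      _ = (4*Cf*P + 2*(|B|+1)) * (1+κ^2) := by ring
      _ ≤ _ := by gcongr; linarith

lemma G_int {c : ℝ} (hc0 : 0 < c) (hc1 : c < 1) : Integrable (fun x : ℝ => |x|^(1+c) * Real.exp (-(1/2) * x^2)) := by
  refine polyint' (by norm_num) _ (by fun_prop) 1 fun x => ?_
  rw [abs_of_nonneg (by positivity), one_mul]
  rcases le_total |x| 1 with h | h
  · have := Real.rpow_le_one (abs_nonneg x) h (show 0 ≤ 1+c by linarith)
    nlinarith
  · calc |x|^(1+c) ≤ |x|^(2:ℝ) := Real.rpow_le_rpow_of_exponent_le h (by linarith)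
      _ = x^2 := by rw [Real.rpow_two, sq_abs]
      _ ≤ _ := by linarith

lemma G_scale {c s : ℝ} (hc0 : 0 < c) (hc1 : c < 1) (hs : 0 < s) :
    Integrable (fun κ : ℝ => |κ|^(1+c) * Real.exp (-(s^2/2) * κ^2)) ∧
    ∫ κ : ℝ, |κ|^(1+c) * Real.exp (-(s^2/2) * κ^2) = s^(-(2+c)) * ∫ x : ℝ, |x|^(1+c) * Real.exp (-(1/2) * x^2) := by
  have i := ((G_int hc0 hc1).comp_mul_left' hs.ne').const_mul (s^(-(1+c)))
  have e : ∀ κ : ℝ, s^(-(1+c)) * (|s*κ|^(1+c) * Real.exp (-(1/2) * (s*κ)^2)) = |κ|^(1+c) * Real.exp (-(s^2/2) * κ^2) := by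
    intro κ
    rw [abs_mul, abs_of_pos hs, Real.mul_rpow hs.le (abs_nonneg _), ← mul_assoc, ← mul_assoc, ← Real.rpow_add hs]
    simp
    left; ring
  have e2 := Measure.integral_comp_mul_left (fun x : ℝ => |x|^(1+c) * Real.exp (-(1/2) * x^2)) s
  simp_rw [e] at i
  refine ⟨i, ?_⟩
  simp_rw [← e]
  rw [integral_const_mul, e2, smul_eq_mul, ← mul_assoc, abs_of_pos (by positivity)]
  congr 1
  rw [← Real.rpow_neg_one, ← Real.rpow_add hs]; congr 1; ring
end VL

namespace VL

set_option maxHeartbeats 1000000 in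
lemma core (c c₁ c₂ B D : ℝ) (hc0 : 0 < c) (hc1 : c < 1) (hc₁0 : 0 < c₁) 
    (hD : 0 < D) (f : ℝ → ℝ) (hmf : Measurable f) {Cf δ : ℝ} (hCf : 0 ≤ Cf) (hδ0 : 0 < δ) (hδ : δ ≤ 1/2)
    (hf : ∀ u, |f u| ≤ Cf * (1+|u|)^δ) :
    ∃ C, 0 < C ∧ ∀ T G s : ℝ, 2 ≤ T → 0 ≤ G → 1 ≤ s → s ≤ T →
      (∀ κ : ℝ, T ^ (-(1 + c₁)) ≤ κ → κ ≤ T ^ (-(1 - c₂)) →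
          |R f κ - π / 2 * κ * (Real.log (1 / κ) + B)| ≤ D * κ ^ (1 + c) * G) →
      |∫ y in (-T)..T, (f y - f0 B y)| ≤
        C * (s * T^δ + T^3 * ((T ^ (-(1 + c₁)))^(2-δ) + G * s^(-(2+c)) + 
          Real.exp (-((s * T ^ (-(1 - c₂)))^2/4)))) := by
  obtain ⟨hR, C', hC', hR'⟩ := R_triv hmf B hCf hδ0 hδ hf
  set Ch := Cf + (1/δ + |1 + (B - 2 + eulerMascheroniConstant + Real.log 2)|) with hCh
  have hCh0 : 0 ≤ Ch := by positivity
  have hm0 : Measurable (f0 B) := by unfold f0; fun_prop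
  have hmh : Measurable (fun u => f u - f0 B u) := hmf.sub hm0
  have hb : ∀ u, |f u - f0 B u| ≤ Ch * (1+|u|)^δ + ell u := by
    intro u
    have h1 := hf u
    have h2 := f0_bd B hδ0 u
    have h3 := abs_sub (f u) (f0 B u)
    rw [hCh, add_mul]; linarith
  set I0 := ∫ z:ℝ, (|z| * (1+|z|)) * Real.exp (-1*z^2) with hI0
  have hI0' : 0 ≤ I0 := integral_nonneg fun z => by positivity
  set E := ∫ u, ell u with hE
  have hE0 : 0 ≤ E := integral_nonneg ell_nonneg
  set Kc := ∫ x:ℝ, |x|^(1+c)*Real.exp (-(1/2)*x^2) with hKc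
  have hKc0 : 0 ≤ Kc := integral_nonneg fun z => by positivity
  have hK'i : Integrable (fun κ:ℝ => (1+κ^2) * Real.exp (-(1/4)*κ^2)) :=
    polyint' (by norm_num) (fun κ => 1+κ^2) (by fun_prop) 1 
      (fun κ => by rw [abs_of_nonneg (by positivity)]; linarith)
  set K' := ∫ κ:ℝ, (1+κ^2) * Real.exp (-(1/4)*κ^2) with hK'
  have hK'0 : 0 ≤ K' := integral_nonneg fun z => by positivity
  refine ⟨4*Ch*I0 + 2*E*√π + 16*(2*C' + D*Kc + C'*K') , ?_, ?_⟩
  · have : 0 ≤ 4*Ch*I0 + 2*E*√π := by positivity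
    have : 0 ≤ D*Kc + C'*K' := by positivity
    linarith
  intro T G s hT hG hs hsT hyp
  set κ1 := T ^ (-(1 + c₁)) with hκ1
  set κ0 := T ^ (-(1 - c₂)) with hκ0
  have hT0 : 0 < T := by linarith
  have hκ1p : 0 < κ1 := by positivity
  have hκ0p : 0 < κ0 := by positivity
  have hκ1le : κ1 ≤ 1 := Real.rpow_le_one_of_one_le_of_nonpos (by linarith) (by linarith)
  have hs0 : 0 < s := by linarith
  obtain ⟨gi, ge⟩ := G_scale hc0 hc1 hs0
  set e0 := Real.exp (-((s * κ0)^2/4)) with he0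
  have he0p : 0 < e0 := Real.exp_pos _
  let V1 : ℝ → ℝ := (Set.Icc (-κ1) κ1).indicator (fun _ => C' * κ1^(1-δ))
  let V2 : ℝ → ℝ := fun κ => D * G * (|κ|^(1+c)*Real.exp (-(s^2/2)*κ^2))
  let V3 : ℝ → ℝ := fun κ => C' * e0 * ((1+κ^2) * Real.exp (-(1/4)*κ^2))
  have iV1 : Integrable V1 := (integrable_indicator_iff measurableSet_Icc).2 
    (integrableOn_const (by simp))
  have iV2 : Integrable V2 := gi.const_mul _
  have iV3 : Integrable V3 := hK'i.const_mul _
  have eV1 : ∫ κ, V1 κ = 2 * C' * κ1^(2-δ) := by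
    simp only [V1]
    rw [integral_indicator measurableSet_Icc, setIntegral_const]
    rw [measureReal_def, Real.volume_Icc, ENNReal.toReal_ofReal (by linarith)]
    rw [show (2:ℝ)-δ = 1 + (1-δ) by ring, Real.rpow_add hκ1p, Real.rpow_one, smul_eq_mul]; ring
  have eV2 : ∫ κ, V2 κ = D * G * (s^(-(2+c)) * Kc) := by
    simp only [V2]; rw [integral_const_mul, ge]
  have eV3 : ∫ κ, V3 κ = C' * e0 * K' := by
    simp only [V3]; rw [integral_const_mul]
  have n1 : ∀ κ, 0 ≤ V1 κ := fun κ => Set.indicator_nonneg (fun _ _ => by positivity) κ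
  have n2 : ∀ κ, 0 ≤ V2 κ := fun κ => by simp only [V2]; positivity
  have n3 : ∀ κ, 0 ≤ V3 κ := fun κ => by simp only [V3]; positivity
  have hRV : ∀ κ, κ ≠ 0 → |R (fun u => f u - f0 B u) κ| * Real.exp (-(s^2/2)*κ^2) ≤ V1 κ + V2 κ + V3 κ := by
    intro κ hκ
    have ha : 0 < |κ| := abs_pos.2 hκ
    rw [R_even]
    have hexp1 : Real.exp (-(s^2/2)*κ^2) ≤ 1 := Real.exp_le_one_iff.2 (by
      have : 0 ≤ s^2/2*κ^2 := by positivity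
      linarith)
    rcases le_or_gt |κ| κ1 with h | h
    · have hV : V1 κ = C' * κ1^(1-δ) := Set.indicator_of_mem (by rw [Set.mem_Icc]; exact abs_le.1 h) _
      have h1 := (hR' |κ| ha).2 (h.trans hκ1le)
      have h2 : |κ|^(1-δ) ≤ κ1^(1-δ) := Real.rpow_le_rpow ha.le h (by linarith)
      have : |R (fun u => f u - f0 B u) (|κ|)| * Real.exp (-(s^2/2)*κ^2) ≤ V1 κ := by
        rw [hV]
        calc _ ≤ (C' * |κ|^(1-δ)) * 1 := by gcongr
          _ ≤ _ := by rw [mul_one]; gcongr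
      linarith [n2 κ, n3 κ]
    · rcases le_or_gt |κ| κ0 with h' | h'
      · have h1 := hyp |κ| h.le h'
        rw [← hR |κ| ha] at h1
        have : |R (fun u => f u - f0 B u) (|κ|)| * Real.exp (-(s^2/2)*κ^2) ≤ V2 κ := by
          calc _ ≤ (D * |κ|^(1+c) * G) * Real.exp (-(s^2/2)*κ^2) := by gcongr
            _ = _ := by simp only [V2]; ring
        linarith [n1 κ, n3 κ]
      · have h1 := (hR' |κ| ha).1
        rw [sq_abs] at h1
        have h2 : Real.exp (-(s^2/2)*κ^2) ≤ e0 * Real.exp (-(1/4)*κ^2) := by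
          rw [he0, ← Real.exp_add]
          apply Real.exp_le_exp.2
          have q1 : κ0^2 ≤ κ^2 := by rw [← sq_abs κ]; gcongr
          have q2 : 1 ≤ s^2 := by nlinarith
          have q3 : s^2*κ0^2 ≤ s^2*κ^2 := by gcongr
          have q4 : 1*κ^2 ≤ s^2*κ^2 := by gcongr
          rw [mul_pow]; linarith
        have : |R (fun u => f u - f0 B u) (|κ|)| * Real.exp (-(s^2/2)*κ^2) ≤ V3 κ := by
          calc _ ≤ (C' * (1+κ^2)) * (e0 * Real.exp (-(1/4)*κ^2)) := by gcongr
            _ = _ := by simp only [V3]; ring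
        linarith [n1 κ, n2 κ]
  have key := main_ineq hmh hCh0 hδ0 hδ hb hs0 hsT (by linarith) (fun κ => V1 κ + V2 κ + V3 κ)
    ((iV1.add iV2).add iV3) hRV
  have eV : ∫ κ, (V1 κ + V2 κ + V3 κ) = 2 * C' * κ1^(2-δ) + D * G * (s^(-(2+c)) * Kc) + C' * e0 * K' := by
    have i12 : Integrable (fun κ => V1 κ + V2 κ) := iV1.add iV2
    rw [integral_add i12 iV3, integral_add iV1 iV2, eV1, eV2, eV3]
  rw [eV] at key
  refine key.trans ?_
  rw [← hI0, ← hE]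
  have hTd : 1 ≤ T^δ := Real.one_le_rpow (by linarith) hδ0.le
  set a := s * T^δ with ha
  have ha1 : 1 ≤ a := by nlinarith
  set p := κ1^(2-δ) with hp
  have hp0 : 0 ≤ p := by positivity
  set q := G * s^(-(2+c)) with hq
  have hq0 : 0 ≤ q := by positivity
  have z1 : 4*s*Ch*T^δ*I0 = 4*Ch*I0*a := by rw [ha]; ring
  have z2 : 2*E*√π ≤ 2*E*√π*a := le_mul_of_one_le_right (by positivity) ha1
  set W := 2*C' + D*Kc + C'*K' with hW
  have w1 : 2*C' ≤ W := by have : 0 ≤ D*Kc + C'*K' := by positivity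
                           linarith
  have w2 : D*Kc ≤ W := by have : 0 ≤ 2*C' + C'*K' := by positivity
                           linarith
  have w3 : C'*K' ≤ W := by have : 0 ≤ 2*C' + D*Kc := by positivity
                            linarith
  have hW0 : 0 ≤ W := by positivity
  have z3 : 2*C'*p + D*G*(s^(-(2+c))*Kc) + C'*e0*K' ≤ W*(p+q+e0) := by
    have y1 : 2*C'*p ≤ W*p := by gcongr
    have y2 : D*Kc*q ≤ W*q := by gcongr
    have y3 : C'*K'*e0 ≤ W*e0 := by gcongr
    have : D*G*(s^(-(2+c))*Kc) = D*Kc*q := by rw [hq]; ring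
    have : C'*e0*K' = C'*K'*e0 := by ring
    have : W*(p+q+e0) = W*p+W*q+W*e0 := by ring
    linarith
  have z4 : 16*T^3*(2*C'*p + D*G*(s^(-(2+c))*Kc) + C'*e0*K') ≤ 16*T^3*(W*(p+q+e0)) := by gcongr
  have z5 : 0 ≤ (4*Ch*I0 + 2*E*√π)*(T^3*(p+q+e0)) := by positivity
  have z6 : 0 ≤ 16*W*a := by positivity
  rw [z1]
  have z7 : (4*Ch*I0 + 2*E*√π + 16*W)*(a + T^3*(p+q+e0)) = 4*Ch*I0*a + 2*E*√π*a + 16*T^3*(W*(p+q+e0))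
      + (4*Ch*I0 + 2*E*√π)*(T^3*(p+q+e0)) + 16*W*a := by ring
  rw [z7]
  linarith

lemma int_f0 (B T : ℝ) (hT : 0 < T) : ∫ y in (-T)..T, f0 B y =
    T * (Real.log T + (B - 2 + eulerMascheroniConstant + Real.log 2)) := by
  unfold f0
  rw [intervalIntegral.integral_div]
  simp_rw [add_assoc (Real.log _)]
  rw [intervalIntegral.integral_add intervalIntegral.intervalIntegrable_log' intervalIntegrable_const,
    integral_log, intervalIntegral.integral_const, Real.log_neg_eq_log, smul_eq_mul]
  ring

lemma triv (B : ℝ) (f : ℝ → ℝ) (hmf : Measurable f) {Cf δ : ℝ} (hCf : 0 ≤ Cf) (hδ0 : 0 < δ) (hδ : δ ≤ 1/2)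
    (hf : ∀ u, |f u| ≤ Cf * (1+|u|)^δ) :
    ∃ C, 0 < C ∧ ∀ T : ℝ, 2 ≤ T → 
      (∫ y in (-T)..T, (f y - f0 B y) = (∫ y in (-T)..T, f y) - T * (Real.log T + (B - 2 + eulerMascheroniConstant + Real.log 2))) ∧
      |∫ y in (-T)..T, (f y - f0 B y)| ≤ C * T^(1+δ) := by
  set Ch := Cf + (1/δ + |1 + (B - 2 + eulerMascheroniConstant + Real.log 2)|) with hCh
  have hCh0 : 0 ≤ Ch := by positivity
  have hm0 : Measurable (f0 B) := by unfold f0; fun_prop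
  have hmh : Measurable (fun u => f u - f0 B u) := hmf.sub hm0
  have hb : ∀ u, |f u - f0 B u| ≤ Ch * (1+|u|)^δ + ell u := by
    intro u
    have h1 := hf u
    have h2 := f0_bd B hδ0 u
    have h3 := abs_sub (f u) (f0 B u)
    rw [hCh, add_mul]; linarith
  set E := ∫ u, ell u with hE
  have hE0 : 0 ≤ E := integral_nonneg ell_nonneg
  refine ⟨4*Ch + E + 1, by positivity, fun T hT => ?_⟩
  have hTa : |(-T)| ≤ T := by rw [abs_neg, abs_of_pos (by linarith)]
  have hTb : |T| ≤ T := by rw [abs_of_pos (by linarith)]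
  constructor
  · have i1 := (loc_int hmf hCf hδ0 (fun u => (hf u).trans (by linarith [ell_nonneg u])) T (-T) T hTa hTb).1
    have i2 := (loc_int hm0 (by positivity) hδ0 (f0_bd B hδ0) T (-T) T hTa hTb).1
    rw [intervalIntegral.integral_sub i1 i2, int_f0 B T (by linarith)]
  · refine (loc_int hmh hCh0 hδ0 hb T (-T) T hTa hTb).2.trans ?_
    rw [abs_of_pos (by linarith), ← hE]
    have hT0 : 0 < T := by linarith
    have h1 : (1+T)^δ ≤ 2 * T^δ := by
      calc (1+T)^δ ≤ (2 * T)^δ := by gcongr; linarith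
        _ = 2^δ * T^δ := by rw [Real.mul_rpow (by norm_num) (by positivity)]
        _ ≤ 2^(1:ℝ) * T^δ := by gcongr <;> linarith
        _ = _ := by rw [Real.rpow_one]
    have h2 : T^(1+δ) = T * T^δ := by rw [Real.rpow_add hT0, Real.rpow_one]
    have h3 : 1 ≤ T^(1+δ) := Real.one_le_rpow (by linarith) (by linarith)
    calc (T - -T) * (Ch * (1+T)^δ) + E ≤ (T - -T) * (Ch * (2 * T^δ)) + E * T^(1+δ) := by
          have : 0 ≤ T - -T := by linarith
          have : E ≤ E * T^(1+δ) := le_mul_of_one_le_right hE0 h3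
          gcongr
      _ = (4*Ch + E) * T^(1+δ) := by rw [h2]; ring
      _ ≤ _ := mul_le_mul_of_nonneg_right (by linarith) (by positivity)

end VL

namespace VL

lemma exp_small (b : ℝ) (hb : 0 < b) : ∃ K, 0 < K ∧ ∀ T x : ℝ, 2 ≤ T → T^b ≤ x → T^3 * Real.exp (-(x/4)) ≤ K := by
  obtain ⟨n, hn⟩ := exists_nat_ge (3/b)
  refine ⟨4^n * n.factorial, by positivity, fun T x hT hx => ?_⟩
  have hT0 : 0 < T := by linarith
  have hTb : 0 < T^b := by positivity
  have h1 := Real.pow_div_factorial_le_exp (x/4) (by linarith) n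
  have h2 : T^3 ≤ x^n := by
    calc T^3 = T^(3:ℝ) := by norm_cast
      _ ≤ T^(b*n) := by
          apply Real.rpow_le_rpow_of_exponent_le (by linarith)
          rw [div_le_iff₀ hb] at hn; linarith
      _ = (T^b)^n := by rw [Real.rpow_mul hT0.le, Real.rpow_natCast]
      _ ≤ x^n := by gcongr
  rw [Real.exp_neg, ← div_eq_mul_inv, div_le_iff₀ (Real.exp_pos _)]
  have h3 : (0:ℝ) < n.factorial := by positivity
  rw [div_le_iff₀ h3, div_pow, div_le_iff₀ (by positivity)] at h1
  nlinarith

/-- choice of s -/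
lemma arith (c c₁ c₂ ε δ : ℝ) (hc0 : 0 < c) (hc₁0 : 0 < c₁) (hc₁1 : c₁ < 1)
    (hc₂0 : 0 < c₂) (hc₂1 : c₂ < 1) (hε : 0 < ε) (hδ0 : 0 < δ) (hδ : δ ≤ ε/2) :
    ∃ K, 0 < K ∧ ∀ T G I C1 C2 : ℝ, 2 ≤ T → 0 ≤ G → 0 < C1 → 0 < C2 → I ≤ C1 * T^(1+δ) →
      (∀ s, 1 ≤ s → s ≤ T → I ≤ C2 * (s * T^δ + T^3 * ((T ^ (-(1 + c₁)))^(2-δ) + G * s^(-(2+c)) + 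
          Real.exp (-((s * T ^ (-(1 - c₂)))^2/4))))) →
      I ≤ (C1 + C2*K) * ((T ^ 3 * G) ^ (1 / (3 + c) + ε) + T ^ (1 - 2 * c₁ + ε) +
              T ^ (1 - c₂ / 4 + ε)) := by
  obtain ⟨K0, hK0, hK⟩ := exp_small (3*c₂/2) (by positivity)
  refine ⟨2 + K0, by positivity, fun T G I C1 C2 hT hG hC1 hC2 hI1 hI2 => ?_⟩
  have hT0 : 0 < T := by linarith
  have hT1 : 1 ≤ T := by linarith
  set Y := T^3*G with hY
  have hY0 : 0 ≤ Y := by positivity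
  set a := 1/(3+c) with ha
  have ha0 : 0 < a := by positivity
  have ha1 : a ≤ 1 / 3 := by rw [ha]; gcongr; linarith
  have hac : a*(3+c) = 1 := by rw [ha]; field_simp
  set X := Y^a with hX
  have hX0 : 0 ≤ X := by positivity
  set P := Y^(a+ε)
  set Q := T^(1-2*c₁+ε)
  set S := T^(1-c₂/4+ε)
  have hP : 0 ≤ P := by positivity
  have hQ : 0 ≤ Q := by positivity
  have hS : 0 ≤ S := by positivity
  -- powers of X
  have hXP : 1 ≤ X → X^(1+2*δ) ≤ P := by
    intro h1
    have hY1 : 1 ≤ Y := by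
      by_contra h
      have : X < 1 := Real.rpow_lt_one hY0 (not_le.1 h) ha0
      linarith
    rw [hX, ← Real.rpow_mul hY0]
    apply Real.rpow_le_rpow_of_exponent_le hY1
    nlinarith
  rcases lt_or_ge T X with hXT | hXT
  · have h1 : T^(1+δ) ≤ P := by
      calc T^(1+δ) ≤ X^(1+δ) := by gcongr
        _ ≤ X^(1+2*δ) := Real.rpow_le_rpow_of_exponent_le (by linarith) (by linarith)
        _ ≤ P := hXP (by linarith)
    calc I ≤ C1 * T^(1+δ) := hI1
      _ ≤ C1 * (P + Q + S) := by gcongr; linarith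
      _ ≤ _ := mul_le_mul_of_nonneg_right (by have : 0 < C2 * (2+K0) := by positivity
                                              linarith) (by positivity)
  · set s1 := T^(1-c₂/4) with hs1
    have hs11 : 1 ≤ s1 := Real.one_le_rpow hT1 (by linarith)
    have hs1T : s1 ≤ T := by
      calc s1 ≤ T^(1:ℝ) := Real.rpow_le_rpow_of_exponent_le hT1 (by linarith)
        _ = T := Real.rpow_one T
    set s := max s1 X with hs
    have hs1' : 1 ≤ s := hs11.trans (le_max_left _ _)
    have hs0 : 0 < s := by linarith
    have key := hI2 s hs1' (max_le hs1T hXT)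
    have hST : s1 * T^δ ≤ S := by
      rw [hs1, ← Real.rpow_add hT0]
      exact Real.rpow_le_rpow_of_exponent_le hT1 (by linarith)
    have e1 : s * T^δ ≤ P + S := by
      rcases le_total X s1 with h | h
      · rw [hs, max_eq_left h]; linarith
      · rw [hs, max_eq_right h]
        have hX1 : 1 ≤ X := by linarith
        have h2 : T^δ ≤ X^(2*δ) := by
          calc T^δ ≤ T^((1-c₂/4)*(2*δ)) := Real.rpow_le_rpow_of_exponent_le hT1 (by nlinarith)
            _ = s1^(2*δ) := by rw [hs1, Real.rpow_mul hT0.le]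
            _ ≤ _ := by gcongr
        calc X * T^δ ≤ X * X^(2*δ) := by gcongr
          _ = X^(1+2*δ) := by rw [Real.rpow_add (by linarith), Real.rpow_one]
          _ ≤ P := hXP hX1
          _ ≤ _ := by linarith
    have hTd : 1 ≤ T^δ := Real.one_le_rpow hT1 hδ0.le
    have e2 : T^3 * (G * s^(-(2+c))) ≤ P + S := by
      refine le_trans ?_ e1
      have h1 : Y ≤ s^(3+c) := by
        calc Y = X^(3+c) := by rw [hX, ← Real.rpow_mul hY0, hac, Real.rpow_one]
          _ ≤ s^(3+c) := by gcongr; exact le_max_right _ _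
      calc T^3 * (G * s^(-(2+c))) = Y * s^(-(2+c)) := by rw [hY]; ring
        _ ≤ s^(3+c) * s^(-(2+c)) := by gcongr
        _ = s := by rw [← Real.rpow_add hs0]; ring_nf; exact Real.rpow_one s
        _ ≤ s * T^δ := le_mul_of_one_le_right hs0.le hTd
    have e3 : T^3 * (T ^ (-(1 + c₁)))^(2-δ) ≤ Q := by
      rw [← Real.rpow_mul hT0.le, ← Real.rpow_natCast, ← Real.rpow_add hT0]
      apply Real.rpow_le_rpow_of_exponent_le hT1
      push_cast
      nlinarith
    have e4 : T^3 * Real.exp (-((s * T ^ (-(1 - c₂)))^2/4)) ≤ K0 * S := by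
      have hS1 : 1 ≤ S := Real.one_le_rpow hT1 (by linarith)
      refine (hK T _ hT ?_).trans (le_mul_of_one_le_right hK0.le hS1)
      calc T^(3*c₂/2) = (s1 * T ^ (-(1 - c₂)))^2 := by
            rw [hs1, ← Real.rpow_add hT0, ← Real.rpow_natCast, ← Real.rpow_mul hT0.le]
            congr 1; push_cast; ring
        _ ≤ _ := by gcongr; exact le_max_left _ _
    have tot : s * T^δ + T^3 * ((T ^ (-(1 + c₁)))^(2-δ) + G * s^(-(2+c)) + 
          Real.exp (-((s * T ^ (-(1 - c₂)))^2/4))) ≤ (2+K0) * (P+Q+S) := by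
      have : 0 ≤ K0 * (P + Q) := by positivity
      nlinarith
    calc I ≤ _ := key
      _ ≤ C2 * ((2+K0) * (P+Q+S)) := by gcongr
      _ ≤ _ := by
        have : 0 ≤ C1 * (P+Q+S) := by positivity
        linarith

end VL

/-- **Lemma 2 (converse Goldston–Montgomery type).** If
`∫ (sin κu / u)² f(u) du = (π/2) κ (log(1/κ) + B) + O(κ^{1+c} g(T))`
uniformly for `T^{-(1+c₁)} ≤ κ ≤ T^{-(1-c₂)}`, then
`∫_{-T}^{T} f = T(log T + A) + O((T³g(T))^{1/(3+c)+ε} + T^{1-2c₁+ε} + T^{1-c₂/4+ε})`,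
where `A = B - 2 + γ₀ + log 2`. -/
theorem variance_lemma_converselot
    (c c₁ c₂ B D : ℝ) (hc0 : 0 < c) (hc1 : c < 1) (hc₁0 : 0 < c₁) (hc₁1 : c₁ < 1)
    (hc₂0 : 0 < c₂) (hc₂1 : c₂ < 1) (hD : 0 < D)
    (g : ℝ → ℝ) (hg : ∀ T : ℝ, 2 ≤ T → 0 ≤ g T)
    (f : ℝ → ℝ) (hmeas : Measurable f) (hnn : ∀ t, 0 ≤ f t)
    (hgrow : ∀ ε : ℝ, 0 < ε → ∃ Cε : ℝ, ∀ t : ℝ, f t ≤ Cε * (1 + |t|) ^ ε) :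
    ∀ ε : ℝ, 0 < ε → ∃ C : ℝ, 0 < C ∧
      ∀ T : ℝ, 2 ≤ T →
        (∀ κ : ℝ, T ^ (-(1 + c₁)) ≤ κ → κ ≤ T ^ (-(1 - c₂)) →
          |(∫ u : ℝ, (if u = 0 then κ ^ 2 else (Real.sin (κ * u) / u) ^ 2) * f u) -
              π / 2 * κ * (Real.log (1 / κ) + B)| ≤ D * κ ^ (1 + c) * g T) →
        |(∫ t in (-T)..T, f t) - T * (Real.log T +
            (B - 2 + Real.eulerMascheroniConstant + Real.log 2))|
          ≤ C * ((T ^ 3 * g T) ^ (1 / (3 + c) + ε) + T ^ (1 - 2 * c₁ + ε) +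
              T ^ (1 - c₂ / 4 + ε)) := by
  intro ε hε
  set δ := min (ε/2) (1/2) with hδ
  have hδ0 : 0 < δ := by rw [hδ]; exact lt_min (by linarith) (by norm_num)
  have hδ1 : δ ≤ ε/2 := min_le_left _ _
  have hδ2 : δ ≤ 1/2 := min_le_right _ _
  obtain ⟨Cf, hCf⟩ := hgrow δ hδ0
  have hCf0 : 0 ≤ Cf := by
    have h1 := hCf 0
    have h2 := hnn 0
    simp at h1
    linarith
  have hf : ∀ u, |f u| ≤ Cf * (1+|u|)^δ := fun u => by
    rw [abs_of_nonneg (hnn u)]; exact hCf u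
  obtain ⟨C1, hC1, h1⟩ := VL.triv B f hmeas hCf0 hδ0 hδ2 hf
  obtain ⟨C2, hC2, h2⟩ := VL.core c c₁ c₂ B D hc0 hc1 hc₁0 hD f hmeas hCf0 hδ0 hδ2 hf
  obtain ⟨K, hK, h3⟩ := VL.arith c c₁ c₂ ε δ hc0 hc₁0 hc₁1 hc₂0 hc₂1 hε hδ0 hδ1
  refine ⟨C1 + C2*K, by positivity, fun T hT hyp => ?_⟩
  obtain ⟨e1, b1⟩ := h1 T hT
  rw [← e1]
  refine h3 T (g T) _ C1 C2 hT (hg T hT) hC1 hC2 b1 (fun s hs1 hsT => ?_)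
  refine h2 T (g T) s hT (hg T hT) hs1 hsT (fun κ ha hb => ?_)
  have e : VL.R f κ = ∫ u : ℝ, (if u = 0 then κ ^ 2 else (Real.sin (κ * u) / u) ^ 2) * f u := by
    unfold VL.R
    apply integral_congr_ae
    have h0 : ∀ᵐ u : ℝ, u ≠ 0 := by simp [ae_iff]
    filter_upwards [h0] with u hu
    rw [if_neg hu]
  rw [e]
  exact hyp κ ha hb
end
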